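/- Let m̂ ∈ P₂(ℝ^d), R ≥ 0, δ > 0 and u ∈ U. Let m : [s, s+τ] → P₂(ℝ^d) be a W₂-continuous solution of the continuity equation ∂_t m_t + div(f(x,m_t,u)m_t) = 0 with constant control u, with m_s ∈ B_R(m̂) and 0 < τ < δ. Then for all t ∈ [s, s+τ]: W₂(m_t, m_s) ≤ C₂(R)·(t − s), where C₂(R) = C₁e^{C₁δ}(1 + 2(C₁δ + ς₂(m̂) + R)e^{2C₁δ}). -/

import Mathlib

open MeasureTheory Set Filter Topology
open scoped ENNReal NNReal InnerProductSpace

noncomputable section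

/-- `ℝ^d` with the Euclidean structure. -/
abbrev Ed (d : ℕ) : Type := EuclideanSpace ℝ (Fin d)

/-- A Borel probability measure with finite second moment. -/
def IsP2Meas {E : Type*} [NormedAddCommGroup E] [MeasurableSpace E] (μ : Measure E) : Prop :=
  IsProbabilityMeasure μ ∧ ∫⁻ x, (‖x‖₊ : ℝ≥0∞) ^ 2 ∂μ < ⊤

/-- The Wasserstein space `P₂(ℝ^d)` of Borel probability measures with finite second moment. -/
def P2 (d : ℕ) : Type := {μ : Measure (Ed d) // IsP2Meas μ}

/-- `ς₂(μ)`, the square root of the second moment of `μ`. -/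
def varsigma2 {d : ℕ} (μ : P2 d) : ℝ :=
  Real.sqrt (∫⁻ x, (‖x‖₊ : ℝ≥0∞) ^ 2 ∂μ.1).toReal

/-- `π` is a plan (coupling) between `μ` and `ν`. -/
def IsCoupling {d : ℕ} (π : Measure (Ed d × Ed d)) (μ ν : P2 d) : Prop :=
  π.map Prod.fst = μ.1 ∧ π.map Prod.snd = ν.1

/-- The quadratic transport cost of a plan. -/
def Wcost {d : ℕ} (π : Measure (Ed d × Ed d)) : ℝ≥0∞ :=
  ∫⁻ p, (‖p.1 - p.2‖₊ : ℝ≥0∞) ^ 2 ∂π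

/-- The 2-Wasserstein distance. -/
def W2 {d : ℕ} (μ ν : P2 d) : ℝ :=
  Real.sqrt (⨅ π ∈ {π : Measure (Ed d × Ed d) | IsCoupling π μ ν}, Wcost π).toReal

/-- `π ∈ Π_o(μ,ν)` : an optimal plan between `μ` and `ν`. -/
def IsOptPlan {d : ℕ} (π : Measure (Ed d × Ed d)) (μ ν : P2 d) : Prop :=
  IsCoupling π μ ν ∧ ∀ π' : Measure (Ed d × Ed d), IsCoupling π' μ ν → Wcost π ≤ Wcost π'

/-- The closed Wasserstein ball `B_R(m̂)`. -/
def ballW {d : ℕ} (mhat : P2 d) (R : ℝ) : Set (P2 d) := {μ | W2 mhat μ ≤ R}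

/-- The open Wasserstein ball `O_R(m̂)`. -/
def oballW {d : ℕ} (mhat : P2 d) (R : ℝ) : Set (P2 d) := {μ | W2 mhat μ < R}

/-- The Dirac measure at the origin as an element of `P₂(ℝ^d)`. -/
def dirac0 (d : ℕ) : P2 d :=
  ⟨Measure.dirac 0, ⟨by infer_instance, by rw [lintegral_dirac]; simp⟩⟩

/-- The class `UC_m̂` : nonnegative, uniformly continuous on every bounded set,
positive-definite at `m̂`. -/
structure UCmem {d : ℕ} (mhat : P2 d) (φ : P2 d → ℝ) : Prop where
  nonneg : ∀ μ : P2 d, 0 ≤ φ μ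
  unif_cont : ∀ R > (0 : ℝ), ∀ η > (0 : ℝ), ∃ δ > (0 : ℝ), ∀ μ ν : P2 d,
    W2 mhat μ ≤ R → W2 mhat ν ≤ R → W2 μ ν ≤ δ → |φ μ - φ ν| ≤ η
  zero_at : φ mhat = 0
  pos_off : ∀ μ : P2 d, μ ≠ mhat → 0 < φ μ

/-- The inf-convolution `φ_κ`. -/
def infConv {d : ℕ} (φ : P2 d → ℝ) (κ : ℝ) (m : P2 d) : ℝ :=
  ⨅ μ : P2 d, (φ μ + 1 / (2 * κ ^ 2) * W2 m μ ^ 2)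

/-- `S(R) = sup_{μ ∈ B_R(m̂)} φ(μ)`. -/
def Sfun {d : ℕ} (mhat : P2 d) (φ : P2 d → ℝ) (R : ℝ) : ℝ := sSup (φ '' ballW mhat R)

/-- `I(R) = inf_{μ ∉ O_R(m̂)} φ(μ)`. -/
def Ifun {d : ℕ} (mhat : P2 d) (φ : P2 d → ℝ) (R : ℝ) : ℝ := sInf (φ '' (oballW mhat R)ᶜ)

/-- `G_R = {μ : φ(μ) ≤ I(R)/2}`. -/
def Gset {d : ℕ} (mhat : P2 d) (φ : P2 d → ℝ) (R : ℝ) : Set (P2 d) :=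
  {μ | φ μ ≤ Ifun mhat φ R / 2}

/-- `G_R^κ = {μ : φ_κ(μ) ≤ I(R)/2}`. -/
def GsetK {d : ℕ} (mhat : P2 d) (φ : P2 d → ℝ) (κ R : ℝ) : Set (P2 d) :=
  {μ | infConv φ κ μ ≤ Ifun mhat φ R / 2}

/-- `𝓡(R) = sup{r ≥ 0 : B_r(m̂) ⊆ G_R}`. -/
def Rfun {d : ℕ} (mhat : P2 d) (φ : P2 d → ℝ) (R : ℝ) : ℝ :=
  sSup {r : ℝ | 0 ≤ r ∧ ballW mhat r ⊆ Gset mhat φ R}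

/-- `M_κ^ε(R) = κ√(2S(R)+ε²κ²) − εκ²`. -/
def Mke {d : ℕ} (mhat : P2 d) (φ : P2 d → ℝ) (κ ε R : ℝ) : ℝ :=
  κ * Real.sqrt (2 * Sfun mhat φ R + ε ^ 2 * κ ^ 2) - ε * κ ^ 2

/-- `M^ε(R) = R + √(2S(R)+ε²)`. -/
def Me {d : ℕ} (mhat : P2 d) (φ : P2 d → ℝ) (ε R : ℝ) : ℝ :=
  R + Real.sqrt (2 * Sfun mhat φ R + ε ^ 2)

/-- `ω_R^ε(δ)`, the modulus of continuity of `φ` on `B_{M^ε(R)}(m̂)`. -/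
def omegaR {d : ℕ} (mhat : P2 d) (φ : P2 d → ℝ) (ε R δ : ℝ) : ℝ :=
  sSup {c : ℝ | ∃ ν₁ ν₂ : P2 d, W2 ν₁ ν₂ ≤ δ ∧ W2 mhat ν₁ ≤ Me mhat φ ε R ∧
    W2 mhat ν₂ ≤ Me mhat φ ε R ∧ c = |φ ν₁ - φ ν₂|}

/-- `K_κ^ε(R) = εκ² + κ√(ε²κ² + 2ω_R^ε(M_κ^ε(R)))`. -/
def Kke {d : ℕ} (mhat : P2 d) (φ : P2 d → ℝ) (κ ε R : ℝ) : ℝ :=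
  ε * κ ^ 2 + κ * Real.sqrt (ε ^ 2 * κ ^ 2 + 2 * omegaR mhat φ ε R (Mke mhat φ κ ε R))

/-- `N_κ^ε(R,m) = εκ√(2φ_κ(m)) + ε·M_κ^ε(R)`. -/
def Nke {d : ℕ} (mhat : P2 d) (φ : P2 d → ℝ) (κ ε R : ℝ) (m : P2 d) : ℝ :=
  ε * κ * Real.sqrt (2 * infConv φ κ m) + ε * Mke mhat φ κ ε R

/-- `μ̄` is an Ekeland point for `(φ,κ,ε,m)`. -/
def EkelandPt {d : ℕ} (φ : P2 d → ℝ) (κ ε : ℝ) (m μb : P2 d) : Prop :=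
  (φ μb + 1 / (2 * κ ^ 2) * W2 m μb ^ 2 ≤ φ m - ε * W2 μb m) ∧
  ∀ μ : P2 d, φ μb + 1 / (2 * κ ^ 2) * W2 m μb ^ 2 ≤
    φ μ + 1 / (2 * κ ^ 2) * W2 m μ ^ 2 + ε * W2 μb μ

/-- The proximal subgradient inequality at `m` with target `μ`, slope measure `α`
and parameter `σ`. -/
def ProxIneq {d : ℕ} (φ : P2 d → ℝ) (ε σ : ℝ) (m : P2 d)
    (α : Measure (Ed d × Ed d)) (μ : P2 d) : Prop :=
  ∀ β : Measure (Ed d × Ed d × Ed d), IsP2Meas β →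
    IsCoupling (β.map fun z => (z.1, z.2.1)) m μ →
    β.map (fun z => (z.1, z.2.2)) = α →
    φ m + ∫ z, ⟪z.2.2, z.2.1 - z.1⟫_ℝ ∂β - σ * ∫ z, ‖z.2.1 - z.1‖ ^ 2 ∂β
      - ε * W2 m μ ≤ φ μ

/-- `α ∈ ∂_P^ε φ(m)` : proximal `ε`-subgradient. -/
def ProxSubgrad {d : ℕ} (φ : P2 d → ℝ) (ε : ℝ) (m : P2 d)
    (α : Measure (Ed d × Ed d)) : Prop :=
  IsP2Meas α ∧ ∃ σ > (0 : ℝ), ∃ r > (0 : ℝ), ∀ μ : P2 d, W2 m μ ≤ r → ProxIneq φ ε σ m α μ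

/-- `(φ,ψ)` is a control-Lyapunov pair at `m̂` for the dynamics `f`, with threshold `ε₀`. -/
structure IsCLP {d : ℕ} {U : Type*} (f : Ed d → P2 d → U → Ed d) (mhat : P2 d)
    (φ : P2 d → ℝ) (ψ : P2 d → ℝ → ℝ) (ε₀ : ℝ) : Prop where
  phi_uc : UCmem mhat φ
  psi_pos : ∀ (m : P2 d) (ε : ℝ), 0 < ε → 0 < ψ m ε
  psi_cont : ∀ (m : P2 d) (ε : ℝ), 0 < ε → ∀ η > (0 : ℝ), ∃ δ > (0 : ℝ),
    ∀ (m' : P2 d) (ε' : ℝ), 0 < ε' → W2 m m' < δ → |ε - ε'| < δ → |ψ m ε - ψ m' ε'| < η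
  level_bdd : ∀ c : ℝ, ∃ K : ℝ, ∀ μ : P2 d, φ μ ≤ c → W2 mhat μ ≤ K
  psi_inf_pos : ∀ r R : ℝ, 0 < r → r < R → ∀ ε > (0 : ℝ), ∃ g > (0 : ℝ),
    ∀ m : P2 d, W2 mhat m ≤ R → ¬ W2 mhat m < r → g ≤ ψ m ε
  psi_mono : ∀ (m : P2 d) (ε ε' : ℝ), 0 < ε → ε ≤ ε' → ψ m ε ≤ ψ m ε'
  eps0_pos : 0 < ε₀
  decrease : ∀ ε : ℝ, 0 < ε → ε < ε₀ → ∀ (m : P2 d) (α : Measure (Ed d × Ed d)),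
    ProxSubgrad φ ε m α → ∃ u : U, ∫ z, ⟪z.2, f z.1 m u⟫_ℝ ∂α ≤ -ψ m ε

/-- A partition of `[0,∞)`. -/
def IsPartition (θ : ℕ → ℝ) : Prop :=
  θ 0 = 0 ∧ StrictMono θ ∧ Tendsto θ atTop atTop

/-- The steps of the partition `θ` lie in `[δ₁, δ₂]` (i.e. `θ ∈ Θ(δ₁,δ₂)`). -/
def StepIn (θ : ℕ → ℝ) (δ₁ δ₂ : ℝ) : Prop :=
  ∀ i : ℕ, δ₁ ≤ θ (i + 1) - θ i ∧ θ (i + 1) - θ i ≤ δ₂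

/-- `W₂`-continuity of a measure-valued curve on `[a,b]`. -/
def W2ContinuousOn {d : ℕ} (m : ℝ → P2 d) (a b : ℝ) : Prop :=
  ∀ t ∈ Icc a b, ∀ η > (0 : ℝ), ∃ δ > (0 : ℝ), ∀ s ∈ Icc a b, |s - t| < δ →
    W2 (m s) (m t) < η

/-- `m` is a `W₂`-continuous distributional solution of the non-local continuity equation
`∂_t m_t + div(f(x,m_t,u) m_t) = 0` on `[a,b]` with constant control `u`. -/
def SolvesCE {d : ℕ} {U : Type*} (f : Ed d → P2 d → U → Ed d) (u : U)
    (m : ℝ → P2 d) (a b : ℝ) : Prop :=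
  W2ContinuousOn m a b ∧
  ∀ χ : Ed d × ℝ → ℝ, ContDiff ℝ (⊤ : ℕ∞) χ → HasCompactSupport χ →
    tsupport χ ⊆ univ ×ˢ Ioo a b →
    ∫ t in a..b, ∫ x, (deriv (fun s : ℝ => χ (x, s)) t +
      fderiv ℝ (fun y : Ed d => χ (y, t)) x (f x (m t) u)) ∂(m t).1 = 0

/-- A `θ`-trajectory of the controlled continuity equation under the feedback `k`,
starting from `m_*`. -/
def IsTraj {d : ℕ} {U : Type*} (f : Ed d → P2 d → U → Ed d) (k : P2 d → U)
    (θ : ℕ → ℝ) (mstar : P2 d) (m : ℝ → P2 d) : Prop :=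
  m 0 = mstar ∧ ∀ i : ℕ, SolvesCE f (k (m (θ i))) m (θ i) (θ (i + 1))

/-- The extremal-shift value `∫ ((x−y)/κ²)·f(x,m,u) dπ(x,y)`. -/
def shiftVal {d : ℕ} {U : Type*} (f : Ed d → P2 d → U → Ed d) (κ : ℝ)
    (π : Measure (Ed d × Ed d)) (m : P2 d) (u : U) : ℝ :=
  ∫ p, ⟪(κ ^ 2)⁻¹ • (p.1 - p.2), f p.1 m u⟫_ℝ ∂π

/-- `k` is an extremal-shift feedback associated with the plan selection `πsel`. -/
def IsExtremalShift {d : ℕ} {U : Type*} (f : Ed d → P2 d → U → Ed d) (κ : ℝ)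
    (πsel : P2 d → Measure (Ed d × Ed d)) (k : P2 d → U) : Prop :=
  ∀ (m : P2 d) (u : U), shiftVal f κ (πsel m) m (k m) ≤ shiftVal f κ (πsel m) m u

/-- `C₂(R)` (computed with time-step bound `δ` and `s = ς₂(m̂)`). -/
def C2const (C₁ δ s R : ℝ) : ℝ :=
  C₁ * Real.exp (C₁ * δ) * (1 + 2 * (C₁ * δ + s + R) * Real.exp (2 * C₁ * δ))

/-- `C₃(R)` (computed with time-step bound `δ` and `s = ς₂(m̂)`). -/
def C3const (C₀ C₁ δ s R : ℝ) : ℝ :=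
  C₀ * (C₁ * Real.exp (C₁ * δ) * (1 + 2 * (C₁ * δ + s + R) * Real.exp (2 * C₁ * δ))
    + C2const C₁ δ s R)

/-- A feedback `k` is s-stabilizing at `m̂`. -/
def SStabilizing {d : ℕ} {U : Type*} (f : Ed d → P2 d → U → Ed d) (mhat : P2 d)
    (k : P2 d → U) : Prop :=
  ∃ M : ℝ → ℝ, (∀ R > (0 : ℝ), 0 < M R) ∧
    Tendsto M (nhdsWithin 0 (Ioi 0)) (nhds 0) ∧
    ∀ r R : ℝ, 0 < r → r < R → ∃ δ > (0 : ℝ), ∃ T > (0 : ℝ),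
      ∀ δhat : ℝ, 0 < δhat → δhat < δ →
      ∀ θ : ℕ → ℝ, IsPartition θ → StepIn θ δhat δ →
      ∀ mstar : P2 d, W2 mhat mstar ≤ R →
      ∀ m : ℝ → P2 d, IsTraj f k θ mstar m →
        (∀ t : ℝ, T ≤ t → W2 mhat (m t) ≤ r) ∧ (∀ t : ℝ, 0 ≤ t → W2 mhat (m t) ≤ M R)

/-!
The idea is to reduce the estimate to the motion of single particles. Along the solution, the
velocity field `v_t(x) = f(x, m_t, u)` is Lipschitz in `x` and continuous in `t`, so it has a flow
`X`, and `m_t` is the image of `m_s` under the flow. To see this, test the equation with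
`η(t) φ(X t T x)`, which `∂_t + v_t · ∇` maps to `η'(t) φ(X t T x)`: by the du Bois-Reymond lemma,
`t ↦ ∫ φ(X t T x) dm_t` is constant. This test function is merely Lipschitz, but its mollifications
are admissible, and their derivatives along `(v, 1)` converge pointwise and boundedly, because
differentiating along `v` and mollifying commute up to an error controlled by the Lipschitz constant
of the test function and the oscillation of `v`.

The coupling given by the flow bounds `W₂(m_t, m_r)` by the `L²` displacement of the particles, that
is, by `(1 + S + ς₂(m_t)) (e^{C₁(r - t)} - 1)` when `ς₂ ≤ S` on `[t, r]`. As `ς₂` is 1-Lipschitz for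
`W₂`, this is a Grönwall inequality for `t ↦ ς₂(m_t)`; inserting the resulting bound for `S` gives
the constant `C₂`.
-/

theorem exp_sub_one_le_mul_exp (x : ℝ) : Real.exp x - 1 ≤ x * Real.exp x := by
  have h : (-x + 1) * Real.exp x ≤ Real.exp (-x) * Real.exp x := by
    gcongr
    exact Real.add_one_le_exp (-x)
  rw [← Real.exp_add, neg_add_cancel, Real.exp_zero] at h
  linarith

section ODE

theorem gronwallBound_zero_mul (A C x : ℝ) :
    gronwallBound 0 A (A * C) x = C * (Real.exp (A * x) - 1) := by
  rcases eq_or_ne A 0 with rfl | hA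
  · simp [gronwallBound_K0]
  · simp [gronwallBound_of_K_ne_0 hA, hA]

variable {E : Type*} [NormedAddCommGroup E] {v : ℝ → E → E} {K : ℝ≥0}

theorem exists_norm_le_mul_one_add_norm (hv : ∀ t, LipschitzWith K (v t))
    (hc : ∀ x, Continuous fun t => v t x) (a b : ℝ) :
    ∃ A : ℝ≥0, ∀ t ∈ Icc a b, ∀ x, ‖v t x‖ ≤ A * (1 + ‖x‖) := by
  obtain ⟨B, hB⟩ := (isCompact_Icc (a := a) (b := b)).exists_bound_of_continuousOn
    (hc 0).continuousOn
  refine ⟨max K B.toNNReal, fun t ht x => ?_⟩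
  calc ‖v t x‖ ≤ ‖v t x - v t 0‖ + ‖v t 0‖ := norm_le_norm_sub_add _ _
    _ ≤ K * ‖x‖ + B.toNNReal := by
        gcongr
        · simpa using (hv t).norm_sub_le x 0
        · exact (hB t ht).trans (Real.le_coe_toNNReal B)
    _ ≤ (max K B.toNNReal : ℝ≥0) * ‖x‖ + (max K B.toNNReal : ℝ≥0) := by
        gcongr
        · exact le_max_left _ _
        · exact le_max_right _ _
    _ = _ := by ring

variable [NormedSpace ℝ E]

theorem norm_sub_le_of_norm_deriv_le_of_le {γ γ' : ℝ → E} {A B s t : ℝ} (hA : 0 ≤ A) (hst : s ≤ t)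
    (hγ : ∀ r ∈ Icc s t, HasDerivWithinAt γ (γ' r) (Icc s t) r)
    (hγ' : ∀ r ∈ Icc s t, ‖γ' r‖ ≤ A * (B + ‖γ r‖)) :
    ‖γ t - γ s‖ ≤ (B + ‖γ s‖) * (Real.exp (A * (t - s)) - 1) := by
  rw [← gronwallBound_zero_mul]
  refine norm_le_gronwallBound_of_norm_deriv_right_le (f := fun r => γ r - γ s) (f' := γ')
    (fun r hr => (hγ r hr).continuousWithinAt.sub continuousWithinAt_const) (fun r hr => ?_)
    (by simp) (fun r hr => ?_) t ⟨hst, le_rfl⟩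
  · exact ((hγ r (Ico_subset_Icc_self hr)).mono_of_mem_nhdsWithin
      (Icc_mem_nhdsGE_of_mem hr)).sub_const _
  · calc ‖γ' r‖ ≤ A * (B + ‖γ r‖) := hγ' r (Ico_subset_Icc_self hr)
      _ ≤ A * (B + (‖γ r - γ s‖ + ‖γ s‖)) := by gcongr; exact norm_le_norm_sub_add _ _
      _ = A * ‖γ r - γ s‖ + A * (B + ‖γ s‖) := by ring

theorem norm_sub_le_of_norm_deriv_le {γ γ' : ℝ → E} {A B s t : ℝ} (hA : 0 ≤ A)
    (hγ : ∀ r ∈ uIcc s t, HasDerivWithinAt γ (γ' r) (uIcc s t) r)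
    (hγ' : ∀ r ∈ uIcc s t, ‖γ' r‖ ≤ A * (B + ‖γ r‖)) :
    ‖γ t - γ s‖ ≤ (B + ‖γ s‖) * (Real.exp (A * |t - s|) - 1) := by
  rcases le_total s t with hst | hts
  · rw [uIcc_of_le hst] at hγ hγ'
    rw [abs_of_nonneg (sub_nonneg.2 hst)]
    exact norm_sub_le_of_norm_deriv_le_of_le hA hst hγ hγ'
  · rw [uIcc_of_ge hts] at hγ hγ'
    have hneg : MapsTo (fun r : ℝ => -r) (Icc (-s) (-t)) (Icc t s) := fun r hr =>
      ⟨by linarith [hr.2], by linarith [hr.1]⟩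
    have key := norm_sub_le_of_norm_deriv_le_of_le (γ := fun r => γ (-r)) (γ' := fun r => -γ' (-r))
      (B := B) hA (neg_le_neg hts) (fun r hr => ?_) (fun r hr => ?_)
    · rw [abs_of_nonpos (sub_nonpos.2 hts)]
      rw [neg_neg, neg_neg, neg_sub_neg] at key
      rwa [neg_sub]
    · simpa [Function.comp_def] using
        (hγ _ (hneg hr)).scomp r (hasDerivAt_neg r).hasDerivWithinAt hneg
    · rw [norm_neg]
      exact hγ' _ (hneg hr)

/-- The radial retraction of a normed space onto the closed ball of radius `R` around `0`. It is
used to truncate vector fields of linear growth; it is meaningful for `0 < R`. -/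
def radialRetraction (R : ℝ) (x : E) : E := (R / max R ‖x‖) • x

variable {R : ℝ}

theorem radialRetraction_of_norm_le (hR : 0 < R) {x : E} (hx : ‖x‖ ≤ R) :
    radialRetraction R x = x := by
  rw [radialRetraction, max_eq_left hx, div_self hR.ne', one_smul]

theorem norm_radialRetraction (hR : 0 < R) (x : E) :
    ‖radialRetraction R x‖ = R / max R ‖x‖ * ‖x‖ := by
  rw [radialRetraction, norm_smul, Real.norm_of_nonneg (by positivity)]

theorem norm_radialRetraction_le (hR : 0 < R) (x : E) : ‖radialRetraction R x‖ ≤ R := by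
  rw [norm_radialRetraction hR, div_mul_eq_mul_div, div_le_iff₀ (by positivity)]
  gcongr
  exact le_max_right _ _

theorem norm_radialRetraction_le_self (hR : 0 < R) (x : E) : ‖radialRetraction R x‖ ≤ ‖x‖ := by
  rw [norm_radialRetraction hR]
  exact mul_le_of_le_one_left (norm_nonneg x)
    (div_le_one_of_le₀ (le_max_left _ _) (by positivity))

theorem lipschitzWith_radialRetraction (hR : 0 < R) :
    LipschitzWith 2 (radialRetraction R : E → E) := by
  refine LipschitzWith.of_dist_le_mul fun x y => ?_
  set a := max R ‖x‖ with ha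
  set b := max R ‖y‖ with hb
  have ha0 : 0 < a := hR.trans_le (le_max_left _ _)
  have hb0 : 0 < b := hR.trans_le (le_max_left _ _)
  have hdecomp : radialRetraction R x - radialRetraction R y
      = (R / a) • (x - y) + (R / a * ((b - a) / b)) • y := by
    simp only [radialRetraction, ← ha, ← hb, smul_sub]
    rw [sub_add, ← sub_smul]
    congr 2
    field_simp
    ring
  have hRa : R / a ≤ 1 := div_le_one_of_le₀ (le_max_left _ _) ha0.le
  have hyb : ‖y‖ / b ≤ 1 := div_le_one_of_le₀ (le_max_right _ _) hb0.le
  have hab : |b - a| ≤ ‖x - y‖ := by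
    calc |b - a| ≤ max |R - R| |‖y‖ - ‖x‖| := abs_max_sub_max_le_max ..
      _ = |‖x‖ - ‖y‖| := by rw [sub_self, abs_zero, max_eq_right (abs_nonneg _), abs_sub_comm]
      _ ≤ ‖x - y‖ := abs_norm_sub_norm_le x y
  rw [dist_eq_norm, dist_eq_norm, hdecomp, NNReal.coe_ofNat, two_mul]
  refine (norm_add_le _ _).trans (add_le_add ?_ ?_)
  · rw [norm_smul, Real.norm_of_nonneg (by positivity)]
    exact mul_le_of_le_one_left (norm_nonneg _) hRa
  · calc ‖(R / a * ((b - a) / b)) • y‖ = R / a * (|b - a| * (‖y‖ / b)) := by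
          rw [norm_smul, norm_mul, norm_div (b - a),
            Real.norm_of_nonneg (by positivity : 0 ≤ R / a), Real.norm_of_nonneg hb0.le,
            Real.norm_eq_abs]
          ring
      _ ≤ 1 * (‖x - y‖ * 1) := by gcongr
      _ = ‖x - y‖ := by ring

/- Picard–Lindelöf solves the equation truncated outside a ball, and the a priori bound keeps the
solution where the truncation is inactive. -/
theorem exists_isIntegralCurveOn_Icc [CompleteSpace E] (hv : ∀ t, LipschitzWith K (v t))
    (hc : ∀ x, Continuous fun t => v t x) {a b t₀ : ℝ} (ht₀ : t₀ ∈ Icc a b) (x₀ : E) :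
    ∃ γ : ℝ → E, γ t₀ = x₀ ∧ IsIntegralCurveOn γ v (Icc a b) := by
  obtain ⟨A, hA⟩ := exists_norm_le_mul_one_add_norm hv hc a b
  set R : ℝ≥0 := ⟨(1 + ‖x₀‖) * Real.exp (A * (b - a)), by positivity⟩
  have hR : (0 : ℝ) < R := by change 0 < (1 + ‖x₀‖) * Real.exp (A * (b - a)); positivity
  have hPL : IsPicardLindelof (fun t x => v t (radialRetraction R x)) (⟨t₀, ht₀⟩ : Icc a b) x₀
      (A * (1 + R) * ⟨b - a, sub_nonneg.2 (ht₀.1.trans ht₀.2)⟩) 0 (A * (1 + R)) (K * 2) := by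
    refine ⟨fun t _ => ((hv t).comp (lipschitzWith_radialRetraction hR)).lipschitzOnWith,
      fun x _ => (hc _).continuousOn, fun t ht x _ => ?_, ?_⟩
    · refine (hA t ht _).trans ?_
      push_cast
      gcongr
      exact norm_radialRetraction_le hR x
    · simp only [NNReal.coe_zero, sub_zero]
      exact mul_le_mul_of_nonneg_left
        (max_le (sub_le_sub_left ht₀.1 b) (sub_le_sub_right ht₀.2 a)) (by positivity)
  obtain ⟨γ, hγ₀ : γ t₀ = x₀, hγ⟩ := hPL.exists_eq_forall_mem_Icc_hasDerivWithinAt₀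
  have hbound : ∀ t ∈ Icc a b, ‖γ t‖ ≤ R := by
    intro t ht
    have hsub : uIcc t₀ t ⊆ Icc a b := ordConnected_Icc.uIcc_subset ht₀ ht
    have hdisp := norm_sub_le_of_norm_deriv_le (γ := γ) (B := 1) A.coe_nonneg
      (fun r hr => (hγ r (hsub hr)).mono hsub) fun r hr => (hA r (hsub hr) _).trans <| by
        gcongr
        exact norm_radialRetraction_le_self hR _
    rw [hγ₀] at hdisp
    calc ‖γ t‖ ≤ ‖γ t - x₀‖ + ‖x₀‖ := norm_le_norm_sub_add _ _
      _ ≤ (1 + ‖x₀‖) * (Real.exp (A * (b - a)) - 1) + ‖x₀‖ := by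
          gcongr
          refine hdisp.trans ?_
          gcongr
          exact abs_sub_le_of_le_of_le ht.1 ht.2 ht₀.1 ht₀.2
      _ ≤ (1 + ‖x₀‖) * Real.exp (A * (b - a)) := by linarith
  refine ⟨γ, hγ₀, fun t ht => ?_⟩
  simpa only [radialRetraction_of_norm_le hR (hbound t ht)] using hγ t ht

theorem exists_isIntegralCurve [CompleteSpace E] (hv : ∀ t, LipschitzWith K (v t))
    (hc : ∀ x, Continuous fun t => v t x) (t₀ : ℝ) (x₀ : E) :
    ∃ γ : ℝ → E, γ t₀ = x₀ ∧ IsIntegralCurve γ v := by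
  have hmem : ∀ {t : ℝ} {N : ℕ}, |t - t₀| < N + 1 → t ∈ Ioo (t₀ - (N + 1)) (t₀ + (N + 1)) :=
    fun h => by rw [← Real.ball_eq_Ioo]; exact h
  have ht₀ : ∀ N : ℕ, t₀ ∈ Ioo (t₀ - (N + 1)) (t₀ + (N + 1)) := fun N =>
    hmem (by rw [sub_self, abs_zero]; positivity)
  have hloc : ∀ N : ℕ, ∃ γ : ℝ → E, γ t₀ = x₀ ∧
      ∀ t ∈ Ioo (t₀ - (N + 1)) (t₀ + (N + 1)), HasDerivAt γ (v t (γ t)) t := by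
    intro N
    obtain ⟨γ, h₀, hγ⟩ := exists_isIntegralCurveOn_Icc hv hc (Ioo_subset_Icc_self (ht₀ N)) x₀
    exact ⟨γ, h₀, fun t ht => (hγ t (Ioo_subset_Icc_self ht)).hasDerivAt (Icc_mem_nhds ht.1 ht.2)⟩
  choose γ h₀ hγ using hloc
  have hagree : ∀ {N M : ℕ}, N ≤ M → EqOn (γ N) (γ M) (Ioo (t₀ - (N + 1)) (t₀ + (N + 1))) := by
    intro N M hNM
    have hNM' : (N : ℝ) ≤ M := Nat.cast_le.2 hNM
    refine ODE_solution_unique_of_mem_Ioo (s := fun _ => univ) (t₀ := t₀)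
      (fun t _ => (hv t).lipschitzOnWith) (ht₀ N)
      (fun t ht => ⟨hγ N t ht, trivial⟩) (fun t ht => ⟨hγ M t ⟨?_, ?_⟩, trivial⟩)
      ((h₀ N).trans (h₀ M).symm)
    · linarith [ht.1]
    · linarith [ht.2]
  have hceil : ∀ t : ℝ, |t - t₀| < (⌈|t - t₀|⌉₊ : ℝ) + 1 := fun t =>
    (Nat.le_ceil _).trans_lt (lt_add_one _)
  have hglue : ∀ {t : ℝ} {N : ℕ}, |t - t₀| < N + 1 → γ ⌈|t - t₀|⌉₊ t = γ N t := by
    intro t N ht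
    rcases le_total N ⌈|t - t₀|⌉₊ with h | h
    · exact (hagree h (hmem ht)).symm
    · exact hagree h (hmem (hceil t))
  refine ⟨fun t => γ ⌈|t - t₀|⌉₊ t, h₀ _, fun t => ?_⟩
  refine (hγ _ t (hmem (hceil t))).congr_of_eventuallyEq ?_
  have hnear : ∀ᶠ r in 𝓝 t, |r - t₀| < (⌈|t - t₀|⌉₊ : ℝ) + 1 :=
    (by fun_prop : Continuous fun r : ℝ => |r - t₀|).continuousAt.eventually_lt_const (hceil t)
  filter_upwards [hnear] with r hr using hglue hr

/-- `X` is the two-parameter flow of the time-dependent vector field `v`: `X s t x` is the position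
at time `t` of the particle that is at `x` at time `s`. -/
structure IsFlow (v : ℝ → E → E) (X : ℝ → ℝ → E → E) : Prop where
  self : ∀ s x, X s s x = x
  isIntegralCurve : ∀ s x, IsIntegralCurve (fun t => X s t x) v

theorem exists_isFlow [CompleteSpace E] (hv : ∀ t, LipschitzWith K (v t))
    (hc : ∀ x, Continuous fun t => v t x) : ∃ X, IsFlow v X := by
  choose X hself hX using fun s x => exists_isIntegralCurve hv hc s x
  exact ⟨fun s t x => X s x t, hself, hX⟩

namespace IsFlow

variable {X : ℝ → ℝ → E → E}

theorem norm_sub_le (hX : IsFlow v X) {A B s t : ℝ} (hA : 0 ≤ A)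
    (hb : ∀ r ∈ uIcc s t, ∀ x, ‖v r x‖ ≤ A * (B + ‖x‖)) (x : E) :
    ‖X s t x - x‖ ≤ (B + ‖x‖) * (Real.exp (A * |t - s|) - 1) := by
  simpa only [hX.self] using norm_sub_le_of_norm_deriv_le (γ := fun r => X s r x) hA
    (fun r _ => (hX.isIntegralCurve s x r).hasDerivWithinAt) fun r hr => hb r hr _

theorem norm_sub_le_mul_abs_sub (hX : IsFlow v X) {A B D s t : ℝ} (hA : 0 ≤ A) (hB : 0 ≤ B)
    (hb : ∀ r ∈ uIcc s t, ∀ x, ‖v r x‖ ≤ A * (B + ‖x‖)) (hst : |t - s| ≤ D) (x : E) :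
    ‖X s t x - x‖ ≤ (B + ‖x‖) * (A * Real.exp (A * D) * |t - s|) :=
  calc ‖X s t x - x‖ ≤ (B + ‖x‖) * (Real.exp (A * |t - s|) - 1) := hX.norm_sub_le hA hb x
    _ ≤ (B + ‖x‖) * (A * |t - s| * Real.exp (A * |t - s|)) := by
        gcongr
        exact exp_sub_one_le_mul_exp _
    _ ≤ (B + ‖x‖) * (A * |t - s| * Real.exp (A * D)) := by gcongr
    _ = (B + ‖x‖) * (A * Real.exp (A * D) * |t - s|) := by ring

theorem comp (hX : IsFlow v X) (hv : ∀ t, LipschitzWith K (v t)) (s t r : ℝ) (x : E) :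
    X t r (X s t x) = X s r x :=
  congrFun (ODE_solution_unique_univ (s := fun _ => univ) (t₀ := t)
    (fun t => (hv t).lipschitzOnWith) (fun r => ⟨hX.isIntegralCurve t (X s t x) r, trivial⟩)
    (fun r => ⟨hX.isIntegralCurve s x r, trivial⟩) (hX.self _ _)) r

theorem norm_sub_le_exp_mul (hX : IsFlow v X) (hv : ∀ t, LipschitzWith K (v t)) (s t : ℝ)
    (x y : E) :
    ‖X s t x - X s t y‖ ≤ Real.exp (K * |t - s|) * ‖x - y‖ := by
  have hdisp := norm_sub_le_of_norm_deriv_le (γ := fun r => X s r x - X s r y) (B := 0) (s := s)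
    (t := t) K.coe_nonneg
    (fun r _ => ((hX.isIntegralCurve s x r).sub (hX.isIntegralCurve s y r)).hasDerivWithinAt)
    fun r _ => by rw [zero_add]; exact (hv r).norm_sub_le _ _
  rw [hX.self, hX.self, zero_add] at hdisp
  linarith [norm_le_norm_sub_add (X s t x - X s t y) (x - y)]

theorem locallyLipschitz (hX : IsFlow v X) (hv : ∀ t, LipschitzWith K (v t))
    (hc : ∀ x, Continuous fun t => v t x) (T : ℝ) :
    LocallyLipschitz fun p : E × ℝ => X p.2 T p.1 := by
  rintro ⟨x₀, s₀⟩
  obtain ⟨A, hA⟩ := exists_norm_le_mul_one_add_norm hv hc (s₀ - 1) (s₀ + 1)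
  have hball : ∀ q ∈ Metric.ball (x₀, s₀) 1,
      ‖q.1‖ ≤ ‖x₀‖ + 1 ∧ q.2 ∈ Icc (s₀ - 1) (s₀ + 1) := by
    intro q hq
    rw [← ball_prod_same, mem_prod, Real.ball_eq_Ioo, mem_ball_iff_norm] at hq
    exact ⟨by linarith [norm_le_norm_sub_add q.1 x₀], Ioo_subset_Icc_self hq.2⟩
  set C := Real.exp (K * (|T - s₀| + 1)) * (1 + (1 + (‖x₀‖ + 1)) * (A * Real.exp (A * 2)))
  refine ⟨C.toNNReal, _, Metric.ball_mem_nhds _ one_pos, LipschitzOnWith.of_dist_le' ?_⟩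
  rintro ⟨x, s⟩ hx ⟨y, t⟩ hy
  have hs := (hball _ hx).2
  have ht := (hball _ hy).2
  have hst : |s - t| ≤ 2 := by linarith [abs_sub_le_of_le_of_le hs.1 hs.2 ht.1 ht.2]
  have hTs : |T - s| ≤ |T - s₀| + 1 := by grind
  have hdisp : ‖X t s y - y‖ ≤ (1 + (‖x₀‖ + 1)) * (A * Real.exp (A * 2) * |s - t|) := by
    refine (hX.norm_sub_le_mul_abs_sub A.coe_nonneg zero_le_one
      (fun r hr => hA r (ordConnected_Icc.uIcc_subset ht hs hr)) hst y).trans ?_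
    gcongr
    exact (hball _ hy).1
  calc dist (X s T x) (X t T y) = ‖X s T x - X s T (X t s y)‖ := by
        rw [hX.comp hv, dist_eq_norm]
    _ ≤ Real.exp (K * |T - s|) * (‖x - y‖ + ‖y - X t s y‖) :=
        (hX.norm_sub_le_exp_mul hv s T _ _).trans <| by
          gcongr
          exact norm_sub_le_norm_sub_add_norm_sub ..
    _ ≤ Real.exp (K * (|T - s₀| + 1)) * (‖x - y‖ +
          (1 + (‖x₀‖ + 1)) * (A * Real.exp (A * 2) * |s - t|)) := by
        rw [norm_sub_rev y]
        gcongr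
    _ ≤ Real.exp (K * (|T - s₀| + 1)) * (dist (x, s) (y, t) +
          (1 + (‖x₀‖ + 1)) * (A * Real.exp (A * 2) * dist (x, s) (y, t))) := by
        gcongr
        · rw [← dist_eq_norm]; exact le_max_left _ _
        · exact le_max_right _ _
    _ = C * dist (x, s) (y, t) := by ring

protected theorem continuous (hX : IsFlow v X) (hv : ∀ t, LipschitzWith K (v t))
    (s t : ℝ) : Continuous (X s t) :=
  (LipschitzWith.of_dist_le_mul (K := (Real.exp (K * |t - s|)).toNNReal) fun x y => by
    simpa only [Real.coe_toNNReal _ (Real.exp_nonneg _), dist_eq_norm] using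
      hX.norm_sub_le_exp_mul hv s t x y).continuous

end IsFlow

end ODE

section Mollification

open ContinuousLinearMap
open scoped Convolution ContDiff

variable {G : Type*} [NormedAddCommGroup G]

theorem exists_seq_contDiffBump_rOut_tendsto_zero {ε : ℝ} (hε : 0 < ε) :
    ∃ ρ : ℕ → ContDiffBump (0 : G), (∀ n, (ρ n).rOut ≤ ε) ∧
      Tendsto (fun n => (ρ n).rOut) atTop (𝓝 0) := by
  refine ⟨fun n => ⟨ε / (n + 1) / 2, ε / (n + 1), by positivity, half_lt_self (by positivity)⟩,
    fun n => div_le_self hε.le (by linarith [n.cast_nonneg (α := ℝ)]), ?_⟩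
  simpa [div_eq_mul_one_div ε] using tendsto_one_div_add_atTop_nhds_zero_nat.const_mul ε

variable [NormedSpace ℝ G] [FiniteDimensional ℝ G] [MeasurableSpace G] [BorelSpace G]
  {μ : Measure G} [μ.IsAddHaarMeasure]
  {χ g : G → ℝ} {V : G → G} {C : ℝ≥0}

theorem hasLineDerivAt_convolution_of_lipschitzWith {k : G → ℝ} (hk : Continuous k)
    (hks : HasCompactSupport k) (hχ : LipschitzWith C χ) (p w : G) :
    ConvolutionExistsAt k (fun q => fderiv ℝ χ q w) p (lsmul ℝ ℝ) μ ∧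
      HasLineDerivAt ℝ (k ⋆[lsmul ℝ ℝ, μ] χ)
        ((k ⋆[lsmul ℝ ℝ, μ] fun q => fderiv ℝ χ q w) p) p w := by
  have hkint : Integrable k μ := hk.integrable_of_hasCompactSupport hks
  have hχc := hχ.continuous
  have hdiff : ∀ᵐ z ∂μ, DifferentiableAt ℝ χ (p - z) :=
    (quasiMeasurePreserving_sub_left μ p).ae hχ.ae_differentiableAt
  refine hasDerivAt_integral_of_dominated_loc_of_lip (s := univ) (μ := μ)
    (F := fun h z => k z • χ (p + h • w - z)) (bound := fun z => |k z| * (C * ‖w‖)) univ_mem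
    (.of_forall fun h => by fun_prop) ?_ ?_ (.of_forall fun z => ?_)
    (hkint.abs.mul_const _) ?_
  · exact Continuous.integrable_of_hasCompactSupport (by fun_prop) hks.smul_right
  · exact hk.aestronglyMeasurable.smul
      ((measurable_fderiv_apply_const ℝ χ w).comp
        (measurable_const.sub measurable_id)).aestronglyMeasurable
  · refine (LipschitzWith.of_dist_le_mul fun h h' => ?_).lipschitzOnWith
    rw [Real.coe_nnabs, abs_mul, abs_abs, abs_of_nonneg (by positivity : 0 ≤ C * ‖w‖)]
    calc dist (k z • χ (p + h • w - z)) (k z • χ (p + h' • w - z))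
        = |k z| * dist (χ (p + h • w - z)) (χ (p + h' • w - z)) := by
          rw [dist_smul₀, Real.norm_eq_abs]
      _ ≤ |k z| * (C * dist (p + h • w - z) (p + h' • w - z)) := by
          gcongr
          exact hχ.dist_le_mul _ _
      _ = |k z| * (C * ‖w‖) * dist h h' := by
          rw [dist_sub_right, dist_add_left, dist_eq_norm, ← sub_smul, norm_smul, ← dist_eq_norm]
          ring
  · filter_upwards [hdiff] with z hz
    have hline := hz.hasFDerivAt.hasLineDerivAt w
    simp only [HasLineDerivAt, sub_add_eq_add_sub] at hline
    exact hline.const_smul (k z)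

theorem abs_fderiv_convolution_sub_le (ρ : ContDiffBump (0 : G)) (hχ : LipschitzWith C χ)
    (hg : Continuous g) (hV : Continuous V) (hχV : ∀ q, HasLineDerivAt ℝ χ (g q) q (V q)) (p : G) :
    |fderiv ℝ (ρ.normed μ ⋆[lsmul ℝ ℝ, μ] χ) p (V p) - (ρ.normed μ ⋆[lsmul ℝ ℝ, μ] g) p| ≤
      C * (ρ.normed μ ⋆[lsmul ℝ ℝ, μ] fun q => ‖V p - V q‖) p := by
  have hρc := ρ.continuous_normed (μ := μ)
  have hρs := ρ.hasCompactSupport_normed (μ := μ)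
  obtain ⟨hint, hline⟩ := hasLineDerivAt_convolution_of_lipschitzWith (μ := μ) hρc hρs hχ p (V p)
  have hdiff : DifferentiableAt ℝ (ρ.normed μ ⋆[lsmul ℝ ℝ, μ] χ) p :=
    (hρs.contDiff_convolution_left (n := 1) _ ρ.contDiff_normed
      hχ.continuous.locallyIntegrable).differentiable one_ne_zero p
  have hae : ∀ᵐ z ∂μ, DifferentiableAt ℝ χ (p - z) :=
    (quasiMeasurePreserving_sub_left μ p).ae hχ.ae_differentiableAt
  have hρg : ConvolutionExistsAt (ρ.normed μ) g p (lsmul ℝ ℝ) μ :=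
    hρs.convolutionExists_left _ hρc hg.locallyIntegrable p
  have hρV : ConvolutionExistsAt (ρ.normed μ) (fun q => ‖V p - V q‖) p (lsmul ℝ ℝ) μ :=
    hρs.convolutionExists_left _ hρc (by fun_prop : Continuous _).locallyIntegrable p
  rw [(hdiff.hasFDerivAt.hasLineDerivAt (V p)).unique hline, convolution_def, convolution_def,
    ← integral_sub hint hρg, convolution_def, ← integral_const_mul]
  refine norm_integral_le_of_norm_le (G := ℝ) (hρV.const_mul (C : ℝ)) ?_
  filter_upwards [hae] with z hz
  have hg_eq : g (p - z) = fderiv ℝ χ (p - z) (V (p - z)) :=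
    (hχV (p - z)).unique (hz.hasFDerivAt.hasLineDerivAt _)
  calc ‖ρ.normed μ z • fderiv ℝ χ (p - z) (V p) - ρ.normed μ z • g (p - z)‖
      = ρ.normed μ z * ‖fderiv ℝ χ (p - z) (V p - V (p - z))‖ := by
        rw [hg_eq, ← smul_sub, ← map_sub, norm_smul, Real.norm_of_nonneg (ρ.nonneg_normed z)]
    _ ≤ ρ.normed μ z * (C * ‖V p - V (p - z)‖) := by
        gcongr
        · exact ρ.nonneg_normed z
        · exact le_of_opNorm_le _ (norm_fderiv_le_of_lipschitz ℝ hχ) _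
    _ = C * (ρ.normed μ z • ‖V p - V (p - z)‖) := by rw [smul_eq_mul]; ring

theorem tendsto_fderiv_convolution {ι : Type*} {l : Filter ι} {ρ : ι → ContDiffBump (0 : G)}
    (hρ : Tendsto (fun i => (ρ i).rOut) l (𝓝 0)) (hχ : LipschitzWith C χ)
    (hg : Continuous g) (hV : Continuous V) (hχV : ∀ q, HasLineDerivAt ℝ χ (g q) q (V q)) (p : G) :
    Tendsto (fun i => fderiv ℝ ((ρ i).normed μ ⋆[lsmul ℝ ℝ, μ] χ) p (V p)) l (𝓝 (g p)) := by
  have hdist := (ContDiffBump.convolution_tendsto_right_of_continuous (μ := μ) hρ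
    (g := fun q => ‖V p - V q‖) (by fun_prop) p).const_mul (C : ℝ)
  rw [sub_self, norm_zero, mul_zero] at hdist
  have hsub := squeeze_zero_norm
    (f := fun i => fderiv ℝ ((ρ i).normed μ ⋆[lsmul ℝ ℝ, μ] χ) p (V p) -
      ((ρ i).normed μ ⋆[lsmul ℝ ℝ, μ] g) p)
    (fun i => abs_fderiv_convolution_sub_le (μ := μ) (ρ i) hχ hg hV hχV p) hdist
  simpa using hsub.add (ContDiffBump.convolution_tendsto_right_of_continuous (μ := μ) hρ hg p)

theorem lipschitzWith_normed_convolution (ρ : ContDiffBump (0 : G)) (hχ : LipschitzWith C χ) :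
    LipschitzWith C (ρ.normed μ ⋆[lsmul ℝ ℝ, μ] χ) := by
  have hexists : ConvolutionExists (ρ.normed μ) χ (lsmul ℝ ℝ) μ :=
    ρ.hasCompactSupport_normed.convolutionExists_left _ ρ.continuous_normed
      hχ.continuous.locallyIntegrable
  refine LipschitzWith.of_dist_le_mul fun p q => ?_
  rw [dist_eq_norm, convolution_def, convolution_def, ← integral_sub (hexists p) (hexists q)]
  calc ‖∫ z, lsmul ℝ ℝ (ρ.normed μ z) (χ (p - z)) - lsmul ℝ ℝ (ρ.normed μ z) (χ (q - z)) ∂μ‖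
      ≤ ∫ z, ρ.normed μ z * (C * dist p q) ∂μ := by
        refine norm_integral_le_of_norm_le (ρ.integrable_normed.mul_const _)
          (.of_forall fun z => ?_)
        rw [← map_sub, lsmul_apply, norm_smul, Real.norm_of_nonneg (ρ.nonneg_normed z),
          ← dist_eq_norm]
        gcongr
        · exact ρ.nonneg_normed z
        · simpa using hχ.dist_le_mul (p - z) (q - z)
    _ = C * dist p q := by rw [integral_mul_const, ρ.integral_normed, one_mul]

theorem tsupport_normed_convolution_subset (ρ : ContDiffBump (0 : G)) :
    tsupport (ρ.normed μ ⋆[lsmul ℝ ℝ, μ] χ) ⊆ Metric.cthickening ρ.rOut (tsupport χ) := by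
  refine closure_minimal ?_ Metric.isClosed_cthickening
  refine (support_convolution_subset_swap _).trans ?_
  rw [ρ.support_normed_eq, add_ball_zero]
  exact (Metric.thickening_subset_of_subset _ (subset_tsupport χ)).trans
    (Metric.thickening_subset_cthickening _ _)

theorem exists_seq_contDiff_tendsto_of_hasLineDerivAt (hχ : LipschitzWith C χ)
    (hχs : HasCompactSupport χ) {U : Set G} (hU : IsOpen U) (hχU : tsupport χ ⊆ U)
    (hg : Continuous g) (hV : Continuous V) (hχV : ∀ q, HasLineDerivAt ℝ χ (g q) q (V q)) :
    ∃ (K : Set G) (χs : ℕ → G → ℝ), IsCompact K ∧ K ⊆ U ∧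
      (∀ n, ContDiff ℝ ∞ (χs n) ∧ tsupport (χs n) ⊆ K ∧ LipschitzWith C (χs n)) ∧
      ∀ p, Tendsto (fun n => fderiv ℝ (χs n) p (V p)) atTop (𝓝 (g p)) := by
  obtain ⟨ε, hε, hεU⟩ := hχs.isCompact.exists_cthickening_subset_open hU hχU
  obtain ⟨ρ, hρε, hρ⟩ := exists_seq_contDiffBump_rOut_tendsto_zero (G := G) hε
  let μ : Measure G := Measure.addHaar
  exact ⟨Metric.cthickening ε (tsupport χ), fun n => (ρ n).normed μ ⋆[lsmul ℝ ℝ, μ] χ,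
    hχs.isCompact.cthickening, hεU,
    fun n => ⟨(ρ n).hasCompactSupport_normed.contDiff_convolution_left _ (ρ n).contDiff_normed
        hχ.continuous.locallyIntegrable,
      (tsupport_normed_convolution_subset (ρ n)).trans (Metric.cthickening_mono (hρε n) _),
      lipschitzWith_normed_convolution (ρ n) hχ⟩,
    tendsto_fderiv_convolution hρ hχ hg hV hχV⟩

end Mollification

section DuBoisReymond

open ContinuousLinearMap
open scoped Convolution ContDiff

variable {F : ℝ → ℝ} {a b : ℝ}

theorem hasDerivAt_convolution_zero_of_forall_integral_deriv_mul_eq_zero {r : ℝ} (hab : a ≤ b)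
    (hF : Continuous F)
    (h : ∀ η : ℝ → ℝ, ContDiff ℝ ∞ η → HasCompactSupport η → tsupport η ⊆ Ioo a b →
      ∫ t in a..b, deriv η t * F t = 0)
    {k : ℝ → ℝ} (hk : ContDiff ℝ ∞ k) (hks : HasCompactSupport k)
    (hkr : (fun z => r - z) ⁻¹' tsupport k ⊆ Ioo a b) :
    HasDerivAt (k ⋆[lsmul ℝ ℝ] F) 0 r := by
  have hconv := hks.hasDerivAt_convolution_left (lsmul ℝ ℝ) (μ := volume)
    (hk.of_le (by simp)) hF.locallyIntegrable r
  suffices hzero : (deriv k ⋆[lsmul ℝ ℝ] F) r = 0 by rwa [hzero] at hconv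
  have hsupp : tsupport (fun z => k (r - z)) ⊆ Ioo a b :=
    (tsupport_comp_eq_preimage k (Homeomorph.subLeft r)).trans_subset hkr
  have hderiv : ∀ z, deriv k (r - z) = -deriv (fun z => k (r - z)) z := fun z => by
    rw [deriv_comp_const_sub, neg_neg]
  have hvanish : ∀ z ∉ Ioc a b, deriv (fun z => k (r - z)) z * F z = 0 := fun z hz => by
    rw [deriv_of_notMem_tsupport fun hz' => hz (Ioo_subset_Ioc_self (hsupp hz')), zero_mul]
  simp only [convolution_eq_swap, lsmul_apply, smul_eq_mul, hderiv, neg_mul, integral_neg]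
  rw [neg_eq_zero, ← setIntegral_eq_integral_of_forall_compl_eq_zero hvanish,
    ← intervalIntegral.integral_of_le hab]
  exact h _ (by fun_prop) (hks.comp_homeomorph (Homeomorph.subLeft r)) hsupp

theorem eq_of_forall_integral_deriv_mul_eq_zero_of_le {s t : ℝ} (hF : Continuous F)
    (h : ∀ η : ℝ → ℝ, ContDiff ℝ ∞ η → HasCompactSupport η → tsupport η ⊆ Ioo a b →
      ∫ t in a..b, deriv η t * F t = 0) (has : a < s) (hst : s ≤ t) (htb : t < b) :
    F t = F s := by
  obtain ⟨ε, hε, hεst⟩ : ∃ ε > 0, ε < min (s - a) (b - t) :=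
    exists_between (lt_min (sub_pos.2 has) (sub_pos.2 htb))
  rw [lt_min_iff] at hεst
  obtain ⟨ρ, hρε, hρ⟩ := exists_seq_contDiffBump_rOut_tendsto_zero (G := ℝ) hε
  have hconst : ∀ n, ((ρ n).normed volume ⋆[lsmul ℝ ℝ] F) t
      = ((ρ n).normed volume ⋆[lsmul ℝ ℝ] F) s := by
    intro n
    have hderiv : ∀ r ∈ Icc s t, HasDerivAt ((ρ n).normed volume ⋆[lsmul ℝ ℝ] F) 0 r :=
      fun r hr => hasDerivAt_convolution_zero_of_forall_integral_deriv_mul_eq_zero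
        (has.le.trans (hst.trans htb.le)) hF h (ρ n).contDiff_normed
        (ρ n).hasCompactSupport_normed fun z hz => by
          rw [mem_preimage, (ρ n).tsupport_normed_eq, mem_closedBall_zero_iff, Real.norm_eq_abs,
            abs_le] at hz
          constructor <;> linarith [hz.1, hz.2, hr.1, hr.2, hρε n]
    exact constant_of_has_deriv_right_zero
      (fun r hr => (hderiv r hr).continuousAt.continuousWithinAt)
      (fun r hr => (hderiv r (Ico_subset_Icc_self hr)).hasDerivWithinAt) t (right_mem_Icc.2 hst)
  refine tendsto_nhds_unique
    (ContDiffBump.convolution_tendsto_right_of_continuous (μ := volume) hρ hF t) ?_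
  simpa only [hconst] using
    ContDiffBump.convolution_tendsto_right_of_continuous (μ := volume) hρ hF s

theorem eq_left_of_forall_integral_deriv_mul_eq_zero (hab : a < b) (hF : ContinuousOn F (Icc a b))
    (h : ∀ η : ℝ → ℝ, ContDiff ℝ ∞ η → HasCompactSupport η → tsupport η ⊆ Ioo a b →
      ∫ t in a..b, deriv η t * F t = 0) :
    ∀ t ∈ Icc a b, F t = F a := by
  let F' : ℝ → ℝ := IccExtend hab.le ((Icc a b).domRestrict F)
  have hF' : Continuous F' := continuousOn_iff_continuous_domRestrict.1 hF |>.Icc_extend'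
  have hF'F : EqOn F' F (Icc a b) := fun t ht => IccExtend_of_mem _ _ ht
  have hint : ∀ η : ℝ → ℝ, ContDiff ℝ ∞ η → HasCompactSupport η → tsupport η ⊆ Ioo a b →
      ∫ t in a..b, deriv η t * F' t = 0 := fun η hη hηs hηab => by
    rw [← h η hη hηs hηab]
    refine intervalIntegral.integral_congr fun t ht => ?_
    rw [uIcc_of_le hab.le] at ht
    rw [hF'F ht]
  let c := (a + b) / 2
  have hc : c ∈ Ioo a b := ⟨left_lt_add_div_two.2 hab, add_div_two_lt_right.2 hab⟩
  have hIoo : EqOn F' (fun _ => F' c) (Ioo a b) := fun t ht => by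
    rcases le_total c t with hct | htc
    · exact eq_of_forall_integral_deriv_mul_eq_zero_of_le hF' hint hc.1 hct ht.2
    · exact (eq_of_forall_integral_deriv_mul_eq_zero_of_le hF' hint ht.1 htc hc.2).symm
  have hIcc : EqOn F' (fun _ => F' c) (Icc a b) := by
    rw [← closure_Ioo hab.ne]
    exact hIoo.closure hF' continuous_const
  intro t ht
  rw [← hF'F ht, ← hF'F (left_mem_Icc.2 hab.le), hIcc ht, hIcc (left_mem_Icc.2 hab.le)]

end DuBoisReymond

section Lipschitz

theorem hasLineDerivAt_of_hasDerivAt_comp {G F : Type*} [NormedAddCommGroup G] [NormedSpace ℝ G]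
    [NormedAddCommGroup F] [NormedSpace ℝ F] {χ : G → F} {C : ℝ≥0} (hχ : LipschitzWith C χ)
    {γ : ℝ → G} {t : ℝ} {w : G} {c : F} (hγ : HasDerivAt γ w t)
    (hc : HasDerivAt (fun s => χ (γ s)) c t) : HasLineDerivAt ℝ χ c (γ t) w := by
  rw [hasDerivAt_iff_isLittleO_nhds_zero] at hγ hc
  rw [HasLineDerivAt, hasDerivAt_iff_isLittleO_nhds_zero]
  have hdiff : (fun h : ℝ => χ (γ t + h • w) - χ (γ (t + h))) =o[𝓝 0] fun h => h := by
    refine (Asymptotics.IsBigO.of_bound C (.of_forall fun h => ?_)).trans_isLittleO hγ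
    rw [sub_sub, norm_sub_rev (γ (t + h))]
    exact hχ.norm_sub_le _ _
  refine (hdiff.add hc).congr_left fun h => ?_
  simp only [zero_add, zero_smul, add_zero]
  abel

theorem exists_lipschitzWith_of_hasCompactSupport {X F : Type*} [PseudoMetricSpace X]
    [ProperSpace X] [NormedAddCommGroup F] {φ : X → F} (hφ : LocallyLipschitz φ)
    (hφs : HasCompactSupport φ) :
    ∃ C, LipschitzWith C φ := by
  obtain ⟨B, hB⟩ : ∃ B : ℝ≥0, ∀ x, ‖φ x‖ ≤ B := by
    obtain ⟨B, hB⟩ := hφs.exists_bound_of_continuous hφ.continuous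
    exact ⟨B.toNNReal, fun x => (hB x).trans (Real.le_coe_toNNReal B)⟩
  obtain ⟨C, hC⟩ := (hφ.locallyLipschitzOn (s := Metric.cthickening 1 (tsupport φ))
    ).exists_lipschitzOnWith_of_compact hφs.isCompact.cthickening
  have hbound : ∀ x ∈ tsupport φ, ∀ y, dist (φ x) (φ y) ≤ max C B * dist x y := by
    intro x hx y
    by_cases hy : y ∈ Metric.cthickening 1 (tsupport φ)
    · refine (hC.dist_le_mul x (Metric.self_subset_cthickening _ hx) y hy).trans ?_
      gcongr
      exact le_max_left _ _
    · have hφy : φ y = 0 := image_eq_zero_of_notMem_tsupport fun h =>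
        hy (Metric.self_subset_cthickening _ h)
      have hxy : 1 ≤ dist x y := by
        by_contra! hlt
        exact hy (Metric.mem_cthickening_of_dist_le y x 1 _ hx (dist_comm x y ▸ hlt.le))
      calc dist (φ x) (φ y) ≤ max C B * 1 := by
            rw [hφy, dist_zero_right, mul_one]
            exact (hB x).trans (le_max_right _ _)
        _ ≤ max C B * dist x y := by gcongr
  refine ⟨max C B, LipschitzWith.of_dist_le_mul fun x y => ?_⟩
  by_cases hx : x ∈ tsupport φ
  · exact hbound x hx y
  by_cases hy : y ∈ tsupport φ
  · rw [dist_comm (φ x), dist_comm x]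
    exact hbound y hy x
  · rw [image_eq_zero_of_notMem_tsupport hx, image_eq_zero_of_notMem_tsupport hy, dist_self]
    positivity

theorem hasCompactSupport_thickenedIndicator {X : Type*} [PseudoMetricSpace X] [ProperSpace X]
    {K : Set X} (hK : IsCompact K) {δ : ℝ} (hδ : 0 < δ) :
    HasCompactSupport (thickenedIndicator hδ K) := by
  refine HasCompactSupport.intro (hK.cthickening (r := δ)) fun x hx => ?_
  exact thickenedIndicator_zero hδ K fun h => hx (Metric.thickening_subset_cthickening _ _ h)

theorem measure_ext_of_forall_lipschitzWith_integral_eq {X : Type*} [MetricSpace X] [ProperSpace X]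
    [MeasurableSpace X] [BorelSpace X] {μ ν : Measure X} [IsFiniteMeasure μ] [IsFiniteMeasure ν]
    (h : ∀ (φ : X → ℝ) (C : ℝ≥0), LipschitzWith C φ → HasCompactSupport φ →
      ∫ x, φ x ∂μ = ∫ x, φ x ∂ν) : μ = ν := by
  have hcompact : ∀ K, IsCompact K → μ K = ν K := by
    intro K hK
    have hpos : ∀ n : ℕ, 0 < 1 / ((n : ℝ) + 1) := fun n => by positivity
    have hlim := tendsto_one_div_add_atTop_nhds_zero_nat (𝕜 := ℝ)
    have hint : ∀ n, ∫ x, (thickenedIndicator (hpos n) K x : ℝ) ∂μ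
        = ∫ x, (thickenedIndicator (hpos n) K x : ℝ) ∂ν := fun n =>
      h _ _ (isometry_subtype_coe.lipschitz.comp (lipschitzWith_thickenedIndicator (hpos n) K))
        ((hasCompactSupport_thickenedIndicator hK (hpos n)).comp_left NNReal.coe_zero)
    have hμ := tendsto_integral_thickenedIndicator_of_isClosed μ hK.isClosed hpos hlim
    have hν := tendsto_integral_thickenedIndicator_of_isClosed ν hK.isClosed hpos hlim
    simp only [hint] at hμ
    exact (measureReal_eq_measureReal_iff).1 (tendsto_nhds_unique hμ hν)
  exact Measure.OuterRegular.ext_isOpen fun U hU =>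
    Measure.InnerRegularWRT.eq_of_innerRegularWRT_of_forall_eq Measure.Regular.innerRegular
      Measure.Regular.innerRegular hcompact hU

end Lipschitz

section Wasserstein

variable {d : ℕ} {μ ν : P2 d} {π : Measure (Ed d × Ed d)} {C : ℝ≥0} {η : ℝ}

instance P2.isProbabilityMeasure (μ : P2 d) : IsProbabilityMeasure μ.1 := μ.2.1

theorem lintegral_nnnorm_sq_eq_eLpNorm_sq {α E : Type*} [MeasurableSpace α]
    [NormedAddCommGroup E] (f : α → E) (μ : Measure α) :
    ∫⁻ x, (‖f x‖₊ : ℝ≥0∞) ^ 2 ∂μ = eLpNorm f 2 μ ^ 2 := by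
  have h := eLpNorm_nnreal_pow_eq_lintegral (f := f) (μ := μ) (p := 2) two_ne_zero
  simpa [enorm_eq_nnnorm] using h.symm

theorem P2.memLp_id (μ : P2 d) : MemLp id 2 μ.1 := by
  have h := μ.2.2
  rw [lintegral_nnnorm_sq_eq_eLpNorm_sq (fun x : Ed d => x)] at h
  exact ⟨aestronglyMeasurable_id, (ENNReal.pow_lt_top_iff.1 h).resolve_right two_ne_zero⟩

theorem sqrt_toReal_lintegral_nnnorm_sq {α E : Type*} [MeasurableSpace α] [NormedAddCommGroup E]
    {f : α → E} {μ : Measure α} (hf : AEStronglyMeasurable f μ) :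
    √(∫⁻ x, (‖f x‖₊ : ℝ≥0∞) ^ 2 ∂μ).toReal = lpNorm f 2 μ := by
  rw [lintegral_nnnorm_sq_eq_eLpNorm_sq, ENNReal.toReal_pow, toReal_eLpNorm hf,
    Real.sqrt_sq lpNorm_nonneg]

theorem varsigma2_eq_lpNorm (μ : P2 d) : varsigma2 μ = lpNorm id 2 μ.1 :=
  sqrt_toReal_lintegral_nnnorm_sq aestronglyMeasurable_id

theorem varsigma2_nonneg (μ : P2 d) : 0 ≤ varsigma2 μ := Real.sqrt_nonneg _

theorem W2_nonneg (μ ν : P2 d) : 0 ≤ W2 μ ν := Real.sqrt_nonneg _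

theorem IsCoupling.prod (μ ν : P2 d) : IsCoupling (μ.1.prod ν.1) μ ν := by
  simp [IsCoupling]

theorem IsCoupling.map_prodMk {X : Ed d → Ed d} (hX : Measurable X) (h : μ.1.map X = ν.1) :
    IsCoupling (μ.1.map fun x => (x, X x)) μ ν := by
  constructor
  · rw [Measure.map_map measurable_fst (by fun_prop)]
    exact Measure.map_id
  · rw [Measure.map_map measurable_snd (by fun_prop)]
    exact h

theorem IsCoupling.swap (h : IsCoupling π μ ν) : IsCoupling (π.map Prod.swap) ν μ := by
  simpa only [IsCoupling, Measure.map_map measurable_fst measurable_swap,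
    Measure.map_map measurable_snd measurable_swap] using! h.symm

theorem IsCoupling.isProbabilityMeasure (h : IsCoupling π μ ν) : IsProbabilityMeasure π := by
  have : IsProbabilityMeasure (π.map Prod.fst) := h.1 ▸ inferInstance
  exact Measure.isProbabilityMeasure_of_map Prod.fst

theorem IsCoupling.integral_fst {g : Ed d → ℝ} (hg : Continuous g) (h : IsCoupling π μ ν) :
    ∫ x, g x ∂μ.1 = ∫ p, g p.1 ∂π := by
  rw [← h.1, integral_map measurable_fst.aemeasurable hg.aestronglyMeasurable]

theorem IsCoupling.integral_snd {g : Ed d → ℝ} (hg : Continuous g) (h : IsCoupling π μ ν) :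
    ∫ x, g x ∂ν.1 = ∫ p, g p.2 ∂π := by
  rw [← h.2, integral_map measurable_snd.aemeasurable hg.aestronglyMeasurable]

theorem IsCoupling.memLp_fst (h : IsCoupling π μ ν) : MemLp Prod.fst 2 π :=
  (h.1 ▸ μ.memLp_id).comp_of_map measurable_fst.aemeasurable

theorem IsCoupling.memLp_snd (h : IsCoupling π μ ν) : MemLp Prod.snd 2 π :=
  (h.2 ▸ ν.memLp_id).comp_of_map measurable_snd.aemeasurable

theorem lpNorm_map {α β E : Type*} [MeasurableSpace α] [MeasurableSpace β]
    [NormedAddCommGroup E] {p : ℝ≥0∞} {μ : Measure α} {X : α → β} {g : β → E}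
    (hg : AEStronglyMeasurable g (μ.map X)) (hX : AEMeasurable X μ) :
    lpNorm g p (μ.map X) = lpNorm (g ∘ X) p μ := by
  rw [← toReal_eLpNorm hg, ← toReal_eLpNorm (hg.comp_aemeasurable hX), eLpNorm_map_measure hg hX]

theorem IsCoupling.lpNorm_fst (h : IsCoupling π μ ν) : lpNorm Prod.fst 2 π = varsigma2 μ := by
  rw [varsigma2_eq_lpNorm, ← h.1, lpNorm_map aestronglyMeasurable_id measurable_fst.aemeasurable]
  rfl

theorem IsCoupling.lpNorm_snd (h : IsCoupling π μ ν) : lpNorm Prod.snd 2 π = varsigma2 ν := by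
  rw [varsigma2_eq_lpNorm, ← h.2, lpNorm_map aestronglyMeasurable_id measurable_snd.aemeasurable]
  rfl

theorem Wcost_eq_eLpNorm_sq (π : Measure (Ed d × Ed d)) :
    Wcost π = eLpNorm (Prod.fst - Prod.snd) 2 π ^ 2 :=
  lintegral_nnnorm_sq_eq_eLpNorm_sq _ _

theorem IsCoupling.Wcost_ne_top (h : IsCoupling π μ ν) : Wcost π ≠ ⊤ := by
  rw [Wcost_eq_eLpNorm_sq]
  exact ENNReal.pow_ne_top (h.memLp_fst.sub h.memLp_snd).eLpNorm_ne_top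

theorem sqrt_toReal_Wcost (π : Measure (Ed d × Ed d)) :
    √(Wcost π).toReal = lpNorm (Prod.fst - Prod.snd) 2 π :=
  sqrt_toReal_lintegral_nnnorm_sq (by fun_prop)

theorem IsCoupling.W2_le (h : IsCoupling π μ ν) :
    W2 μ ν ≤ lpNorm (Prod.fst - Prod.snd) 2 π := by
  rw [← sqrt_toReal_Wcost]
  exact Real.sqrt_le_sqrt (ENNReal.toReal_mono h.Wcost_ne_top (iInf₂_le π h))

theorem exists_isCoupling_lpNorm_lt (h : W2 μ ν < η) :
    ∃ π, IsCoupling π μ ν ∧ lpNorm (Prod.fst - Prod.snd) 2 π < η := by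
  have hη : 0 < η := (W2_nonneg μ ν).trans_lt h
  have hne : ⨅ π ∈ {π : Measure (Ed d × Ed d) | IsCoupling π μ ν}, Wcost π ≠ ⊤ :=
    ne_top_of_le_ne_top (IsCoupling.prod μ ν).Wcost_ne_top
      (iInf₂_le (μ.1.prod ν.1) (IsCoupling.prod μ ν))
  rw [W2, Real.sqrt_lt' hη, ← ENNReal.lt_ofReal_iff_toReal_lt hne] at h
  simp only [iInf_lt_iff] at h
  obtain ⟨π, hπ, hlt⟩ := h
  refine ⟨π, hπ, ?_⟩
  rw [← sqrt_toReal_Wcost, Real.sqrt_lt' hη]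
  exact (ENNReal.lt_ofReal_iff_toReal_lt hπ.Wcost_ne_top).1 hlt

theorem le_mul_W2_of_forall_isCoupling {A : ℝ}
    (h : ∀ π, IsCoupling π μ ν → A ≤ C * lpNorm (Prod.fst - Prod.snd) 2 π) : A ≤ C * W2 μ ν := by
  have hlim : Tendsto (fun η : ℝ => C * η) (𝓝[>] W2 μ ν) (𝓝 (C * W2 μ ν)) :=
    (continuous_const_mul (C : ℝ)).continuousWithinAt
  refine ge_of_tendsto hlim (eventually_mem_nhdsWithin.mono fun η hη => ?_)
  obtain ⟨π, hπ, hlt⟩ := exists_isCoupling_lpNorm_lt hη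
  exact (h π hπ).trans (by gcongr)

theorem le_W2_of_forall_isCoupling {A : ℝ}
    (h : ∀ π, IsCoupling π μ ν → A ≤ lpNorm (Prod.fst - Prod.snd) 2 π) : A ≤ W2 μ ν := by
  simpa using le_mul_W2_of_forall_isCoupling (C := 1) (by simpa using h)

theorem W2_comm (μ ν : P2 d) : W2 μ ν = W2 ν μ := by
  suffices H : ∀ μ ν : P2 d, W2 μ ν ≤ W2 ν μ from (H μ ν).antisymm (H ν μ)
  intro μ ν
  refine le_W2_of_forall_isCoupling fun π hπ => hπ.swap.W2_le.trans_eq ?_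
  rw [lpNorm_map (by fun_prop) measurable_swap.aemeasurable, lpNorm_sub_comm]
  rfl

theorem varsigma2_le_varsigma2_add_W2 (μ ν : P2 d) : varsigma2 μ ≤ varsigma2 ν + W2 μ ν := by
  rw [← sub_le_iff_le_add']
  refine le_W2_of_forall_isCoupling fun π hπ => ?_
  rw [← hπ.lpNorm_fst, ← hπ.lpNorm_snd, sub_le_iff_le_add']
  exact lpNorm_le_lpNorm_add_lpNorm_sub' hπ.memLp_snd one_le_two

theorem abs_varsigma2_sub_le_W2 (μ ν : P2 d) : |varsigma2 μ - varsigma2 ν| ≤ W2 μ ν := by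
  rw [abs_sub_le_iff, sub_le_iff_le_add', sub_le_iff_le_add']
  exact ⟨varsigma2_le_varsigma2_add_W2 μ ν, W2_comm μ ν ▸ varsigma2_le_varsigma2_add_W2 ν μ⟩

theorem W2_le_of_map_eq {X : Ed d → Ed d} {B E : ℝ} (hB : 0 ≤ B) (hE : 0 ≤ E) (hX : Measurable X)
    (hμν : μ.1.map X = ν.1) (h : ∀ x, ‖X x - x‖ ≤ (B + ‖x‖) * E) :
    W2 μ ν ≤ (B + varsigma2 μ) * E := by
  have hid : MemLp (fun x : Ed d => ‖x‖) 2 μ.1 := μ.memLp_id.norm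
  have hB' : MemLp (fun _ : Ed d => B) 2 μ.1 := memLp_const B
  calc W2 μ ν
      ≤ lpNorm (Prod.fst - Prod.snd) 2 (μ.1.map fun x => (x, X x)) :=
        (IsCoupling.map_prodMk hX hμν).W2_le
    _ = lpNorm (fun x => x - X x) 2 μ.1 := by
        rw [lpNorm_map (by fun_prop) (by fun_prop)]
        rfl
    _ ≤ lpNorm (E • fun x : Ed d => B + ‖x‖) 2 μ.1 :=
        lpNorm_mono_real ((hB'.add hid).const_smul E) fun x => by
          rw [norm_sub_rev]
          exact (h x).trans_eq (mul_comm _ _)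
    _ = E * lpNorm (fun x : Ed d => B + ‖x‖) 2 μ.1 := by
        rw [lpNorm_const_smul, coe_nnnorm, Real.norm_of_nonneg hE]
    _ ≤ E * (lpNorm (fun _ : Ed d => B) 2 μ.1 + lpNorm (fun x : Ed d => ‖x‖) 2 μ.1) := by
        gcongr
        exact lpNorm_add_le hB' one_le_two
    _ = (B + varsigma2 μ) * E := by
        have hς : lpNorm (fun x : Ed d => ‖x‖) 2 μ.1 = varsigma2 μ :=
          (lpNorm_norm aestronglyMeasurable_id 2).trans (varsigma2_eq_lpNorm μ).symm
        have hc : lpNorm (fun _ : Ed d => B) 2 μ.1 = B := by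
          rw [lpNorm_const two_ne_zero (IsProbabilityMeasure.ne_zero _), probReal_univ,
            Real.one_rpow, mul_one, Real.norm_of_nonneg hB]
        rw [hς, hc, mul_comm]

theorem W2_self (μ : P2 d) : W2 μ μ = 0 :=
  ((W2_le_of_map_eq zero_le_one le_rfl measurable_id Measure.map_id (by simp)).trans_eq
    (mul_zero _)).antisymm (W2_nonneg μ μ)

theorem abs_integral_sub_integral_le_mul_W2 {h : Ed d → ℝ} (hh : LipschitzWith C h)
    (hμ : Integrable h μ.1) (hν : Integrable h ν.1) :
    |∫ x, h x ∂μ.1 - ∫ x, h x ∂ν.1| ≤ C * W2 μ ν := by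
  refine le_mul_W2_of_forall_isCoupling fun π hπ => ?_
  have := hπ.isProbabilityMeasure
  have hsub : MemLp (Prod.fst - Prod.snd) 2 π := hπ.memLp_fst.sub hπ.memLp_snd
  have hint : Integrable (fun p : Ed d × Ed d => ‖p.1 - p.2‖) π :=
    (hsub.integrable one_le_two).norm
  have hμ' : Integrable (fun p : Ed d × Ed d => h p.1) π :=
    (hπ.1 ▸ hμ).comp_measurable measurable_fst
  have hν' : Integrable (fun p : Ed d × Ed d => h p.2) π :=
    (hπ.2 ▸ hν).comp_measurable measurable_snd
  calc |∫ x, h x ∂μ.1 - ∫ x, h x ∂ν.1|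
      = |∫ p, (h p.1 - h p.2) ∂π| := by
        rw [hπ.integral_fst hh.continuous, hπ.integral_snd hh.continuous, integral_sub hμ' hν']
    _ ≤ ∫ p, C * ‖p.1 - p.2‖ ∂π :=
        norm_integral_le_of_norm_le (hint.const_mul _) (.of_forall fun p => hh.norm_sub_le p.1 p.2)
    _ = C * lpNorm (Prod.fst - Prod.snd) 1 π := by
        rw [integral_const_mul, lpNorm_one_eq_integral_norm (by fun_prop)]
        rfl
    _ ≤ C * lpNorm (Prod.fst - Prod.snd) 2 π := by
        gcongr
        rw [← toReal_eLpNorm (by fun_prop), ← toReal_eLpNorm (by fun_prop)]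
        exact ENNReal.toReal_mono hsub.eLpNorm_ne_top
          (eLpNorm_le_eLpNorm_of_exponent_le one_le_two (by fun_prop))

theorem abs_integral_prodMk_sub_le {h : Ed d × ℝ → ℝ} (hh : LipschitzWith C h) {D : ℝ}
    (hD : ∀ p, |h p| ≤ D) (r t : ℝ) :
    |∫ x, h (x, r) ∂μ.1 - ∫ x, h (x, t) ∂ν.1| ≤ C * |r - t| + C * W2 μ ν := by
  have hint (μ : P2 d) (t : ℝ) : Integrable (fun x => h (x, t)) μ.1 :=
    .of_bound (hh.continuous.comp (by fun_prop)).aestronglyMeasurable D (.of_forall fun x => hD _)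
  have htime : |∫ x, h (x, r) ∂μ.1 - ∫ x, h (x, t) ∂μ.1| ≤ C * |r - t| := by
    have hb (x : Ed d) : ‖h (x, r) - h (x, t)‖ ≤ C * |r - t| := by
      simpa [← dist_eq_norm, Real.dist_eq] using hh.dist_le_mul (x, r) (x, t)
    rw [← integral_sub (hint μ r) (hint μ t)]
    simpa using norm_integral_le_of_norm_le_const (μ := μ.1) (.of_forall hb)
  have hspace : |∫ x, h (x, t) ∂μ.1 - ∫ x, h (x, t) ∂ν.1| ≤ C * W2 μ ν :=
    abs_integral_sub_integral_le_mul_W2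
      (by simpa using! hh.comp (LipschitzWith.prodMk_right t)) (hint μ t) (hint ν t)
  exact (abs_sub_le _ _ _).trans (add_le_add htime hspace)

theorem W2ContinuousOn.tendsto_W2 {m : ℝ → P2 d} {a b t : ℝ} (hm : W2ContinuousOn m a b)
    (ht : t ∈ Icc a b) : Tendsto (fun r => W2 (m r) (m t)) (𝓝[Icc a b] t) (𝓝 0) := by
  rw [Metric.tendsto_nhdsWithin_nhds]
  intro η hη
  obtain ⟨δ, hδ, h⟩ := hm t ht η hη
  refine ⟨δ, hδ, fun {r} hr hrt => ?_⟩
  rw [Real.dist_0_eq_abs, abs_of_nonneg (W2_nonneg _ _)]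
  exact h r hr hrt

theorem W2ContinuousOn.continuousOn_varsigma2 {m : ℝ → P2 d} {a b : ℝ}
    (hm : W2ContinuousOn m a b) : ContinuousOn (fun t => varsigma2 (m t)) (Icc a b) := fun t ht =>
  tendsto_iff_dist_tendsto_zero.2 <| squeeze_zero (fun _ => dist_nonneg)
    (fun r => abs_varsigma2_sub_le_W2 (m r) (m t)) (hm.tendsto_W2 ht)

theorem W2ContinuousOn.continuousOn_integral {m : ℝ → P2 d} {a b : ℝ}
    (hm : W2ContinuousOn m a b) {g : Ed d × ℝ → ℝ} (hg : Continuous g) {B : ℝ}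
    (hgB : ∀ p, |g p| ≤ B) : ContinuousOn (fun t => ∫ x, g (x, t) ∂(m t).1) (Icc a b) := by
  intro t ht
  let P (r : ℝ) : ProbabilityMeasure (Ed d × ℝ) :=
    ⟨(m r).1.map fun x => (x, r), Measure.isProbabilityMeasure_map (by fun_prop)⟩
  have hP (h : Ed d × ℝ → ℝ) (hh : Continuous h) (r : ℝ) :
      ∫ p, h p ∂(P r : Measure (Ed d × ℝ)) = ∫ x, h (x, r) ∂(m r).1 :=
    integral_map (by fun_prop) hh.aestronglyMeasurable
  suffices hlim : Tendsto P (𝓝[Icc a b] t) (𝓝 (P t)) by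
    have := ProbabilityMeasure.tendsto_iff_forall_integral_tendsto.1 hlim
      (BoundedContinuousFunction.ofNormedAddCommGroup g hg B hgB)
    simpa only [ContinuousWithinAt, BoundedContinuousFunction.coe_ofNormedAddCommGroup, hP g hg]
      using this
  refine tendsto_iff_forall_lipschitz_integral_tendsto.2 fun h ⟨D, hD⟩ ⟨L, hL⟩ => ?_
  have hbound (p : Ed d × ℝ) : |h p| ≤ D + |h 0| := by
    linarith [abs_sub_abs_le_abs_sub (h p) (h 0), Real.dist_eq (h p) (h 0), hD p 0]
  have hlim : Tendsto (fun r => L * |r - t| + L * W2 (m r) (m t)) (𝓝[Icc a b] t) (𝓝 0) := by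
    have habs : Tendsto (fun r => |r - t|) (𝓝[Icc a b] t) (𝓝 0) := by
      have : Continuous fun r => |r - t| := by fun_prop
      simpa using (this.tendsto t).mono_left nhdsWithin_le_nhds
    simpa using (habs.const_mul (L : ℝ)).add ((hm.tendsto_W2 ht).const_mul (L : ℝ))
  simp only [hP h hL.continuous]
  exact tendsto_iff_dist_tendsto_zero.2 (squeeze_zero (fun _ => dist_nonneg)
    (fun r => abs_integral_prodMk_sub_le hL hbound r t) hlim)

end Wasserstein

section ContinuityEquation

open scoped ContDiff

variable {d : ℕ} {m : ℝ → P2 d} {a b : ℝ}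

theorem deriv_add_fderiv_eq_fderiv_prodMk {E : Type*} [NormedAddCommGroup E] [NormedSpace ℝ E]
    {χ : E × ℝ → ℝ} {x : E} {t : ℝ} (hχ : DifferentiableAt ℝ χ (x, t)) (w : E) :
    deriv (fun s => χ (x, s)) t + fderiv ℝ (fun y => χ (y, t)) x w =
      fderiv ℝ χ (x, t) (w, 1) := by
  have htime : HasDerivAt (fun s : ℝ => χ (x, s)) (fderiv ℝ χ (x, t) (0, 1)) t :=
    hχ.hasFDerivAt.comp_hasDerivAt t ((hasDerivAt_const t x).prodMk (hasDerivAt_id t))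
  have hspace : HasFDerivAt (fun y : E => χ (y, t))
      ((fderiv ℝ χ (x, t)).comp (ContinuousLinearMap.inl ℝ E ℝ)) x :=
    hχ.hasFDerivAt.comp x (hasFDerivAt_prodMk_left x t)
  rw [htime.deriv, hspace.fderiv, ContinuousLinearMap.comp_apply, ContinuousLinearMap.inl_apply,
    ← map_add, Prod.mk_add_mk, zero_add, add_zero]

theorem exists_forall_abs_fderiv_apply_le {G : Type*} [NormedAddCommGroup G] [NormedSpace ℝ G]
    {V : G → G} {S : Set G} (hV : ContinuousOn V S) (hS : IsCompact S) (C : ℝ≥0) :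
    ∃ B, ∀ χ : G → ℝ, LipschitzWith C χ → tsupport χ ⊆ S → ∀ p, |fderiv ℝ χ p (V p)| ≤ B := by
  obtain ⟨B, hB⟩ := hS.exists_bound_of_continuousOn hV
  refine ⟨C * max B 0, fun χ hχ hχS p => ?_⟩
  by_cases hp : p ∈ S
  · exact (fderiv ℝ χ p).le_of_opNorm_le_of_le (norm_fderiv_le_of_lipschitz ℝ hχ)
      ((hB p hp).trans (le_max_left B 0))
  · have hzero : fderiv ℝ χ p = 0 :=
      image_eq_zero_of_notMem_tsupport fun hp' => hp (hχS (tsupport_fderiv_subset ℝ hp'))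
    simp only [hzero, zero_apply, abs_zero]
    positivity

theorem W2ContinuousOn.tendsto_integral_integral (hm : W2ContinuousOn m a b) (hab : a ≤ b)
    {gs : ℕ → Ed d × ℝ → ℝ} {g : Ed d × ℝ → ℝ} {B : ℝ} (hc : ∀ n, Continuous (gs n))
    (hB : ∀ n p, |gs n p| ≤ B) (hlim : ∀ p, Tendsto (fun n => gs n p) atTop (𝓝 (g p))) :
    Tendsto (fun n => ∫ t in a..b, ∫ x, gs n (x, t) ∂(m t).1) atTop
      (𝓝 (∫ t in a..b, ∫ x, g (x, t) ∂(m t).1)) := by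
  have hinner (t : ℝ) :
      Tendsto (fun n => ∫ x, gs n (x, t) ∂(m t).1) atTop (𝓝 (∫ x, g (x, t) ∂(m t).1)) :=
    tendsto_integral_of_dominated_convergence (fun _ => B)
      (fun n => ((hc n).comp (by fun_prop)).aestronglyMeasurable) (integrable_const _)
      (fun n => .of_forall fun x => hB n (x, t)) (.of_forall fun x => hlim (x, t))
  refine intervalIntegral.tendsto_integral_filter_of_dominated_convergence (fun _ => B)
    (.of_forall fun n => ?_) (.of_forall fun n => .of_forall fun t _ => ?_)
    intervalIntegrable_const (.of_forall fun t _ => hinner t)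
  · rw [uIoc_of_le hab]
    exact ((hm.continuousOn_integral (hc n) (hB n)).mono
      Ioc_subset_Icc_self).aestronglyMeasurable measurableSet_Ioc
  · have hnorm (x : Ed d) : ‖gs n (x, t)‖ ≤ B := hB n (x, t)
    simpa using norm_integral_le_of_norm_le_const (μ := (m t).1) (.of_forall hnorm)

/-- `m` is a `W₂`-continuous distributional solution on `[a, b]` of the linear continuity equation
`∂_t m_t + div (v_t m_t) = 0`. The time derivative and the transport term of the test function `χ`
are combined into the derivative of `χ` along the space-time field `(v, 1)`. -/
structure IsWeakSolution (v : ℝ → Ed d → Ed d) (m : ℝ → P2 d) (a b : ℝ) : Prop where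
  continuousOn : W2ContinuousOn m a b
  integral_eq_zero : ∀ χ : Ed d × ℝ → ℝ, ContDiff ℝ ∞ χ → HasCompactSupport χ →
    tsupport χ ⊆ univ ×ˢ Ioo a b →
    ∫ t in a..b, ∫ x, fderiv ℝ χ (x, t) (v t x, 1) ∂(m t).1 = 0

variable {E : Type*} [NormedAddCommGroup E] [NormedSpace ℝ E] {v : ℝ → E → E}
  {X : ℝ → ℝ → E → E} {K : ℝ≥0} {η : ℝ → ℝ} {φ : E → ℝ}

theorem IsFlow.hasLineDerivAt_mul_comp (hX : IsFlow v X) (hv : ∀ t, LipschitzWith K (v t))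
    {L : ℝ≥0} {T : ℝ} (hη : Differentiable ℝ η)
    (hL : LipschitzWith L fun p : E × ℝ => η p.2 * φ (X p.2 T p.1)) (p : E × ℝ) :
    HasLineDerivAt ℝ (fun p : E × ℝ => η p.2 * φ (X p.2 T p.1))
      (deriv η p.2 * φ (X p.2 T p.1)) p (v p.2 p.1, 1) := by
  obtain ⟨x, t⟩ := p
  have hγ : HasDerivAt (fun r => (X t r x, r)) (v t x, (1 : ℝ)) t := by
    simpa only [hX.self] using! (hX.isIntegralCurve t x t).prodMk (hasDerivAt_id t)
  have hc : HasDerivAt (fun r => η r * φ (X r T (X t r x))) (deriv η t * φ (X t T x)) t := by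
    simpa only [hX.comp hv] using (hη t).hasDerivAt.mul_const (φ (X t T x))
  simpa only [hX.self] using hasLineDerivAt_of_hasDerivAt_comp hL hγ hc

theorem IsFlow.hasCompactSupport_mul_comp [ProperSpace E] (hX : IsFlow v X)
    (hv : ∀ t, LipschitzWith K (v t)) (hc : ∀ x, Continuous fun t => v t x)
    (hη : HasCompactSupport η) (hφ : HasCompactSupport φ) (T : ℝ) :
    HasCompactSupport fun p : E × ℝ => η p.2 * φ (X p.2 T p.1) := by
  obtain ⟨ρ, hρ⟩ := hφ.isCompact.isBounded.subset_closedBall 0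
  obtain ⟨r, hr⟩ := hη.isCompact.isBounded.subset_closedBall T
  obtain ⟨A, hA⟩ := exists_norm_le_mul_one_add_norm hv hc (T - r) (T + r)
  refine .of_support_subset_isCompact ((isCompact_closedBall 0
    (ρ + (1 + ρ) * (Real.exp (A * r) - 1))).prod hη.isCompact) ?_
  rintro ⟨x, t⟩ hp
  obtain ⟨hηt, hφx⟩ := mul_ne_zero_iff.1 (Function.mem_support.1 hp)
  have htη : t ∈ tsupport η := subset_tsupport η hηt
  have hy : ‖X t T x‖ ≤ ρ := mem_closedBall_zero_iff.1 (hρ (subset_tsupport φ hφx))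
  have hρ₀ : 0 ≤ ρ := (norm_nonneg _).trans hy
  have htr : |t - T| ≤ r := Metric.mem_closedBall.1 (hr htη)
  refine ⟨mem_closedBall_zero_iff.2 ?_, htη⟩
  have hdisp : ‖x - X t T x‖ ≤ (1 + ‖X t T x‖) * (Real.exp (A * |t - T|) - 1) := by
    have := hX.norm_sub_le A.coe_nonneg (s := T) (t := t) (fun s hs => hA s ?_) (X t T x)
    · rwa [hX.comp hv, hX.self] at this
    · rw [← Real.closedBall_eq_Icc]
      exact (convex_closedBall T r).ordConnected.uIcc_subset
        (Metric.mem_closedBall_self ((abs_nonneg _).trans htr)) (hr htη) hs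
  calc ‖x‖ ≤ ‖X t T x‖ + ‖x - X t T x‖ := norm_le_norm_add_norm_sub' _ _
    _ ≤ ρ + (1 + ρ) * (Real.exp (A * r) - 1) := by
      refine add_le_add hy (hdisp.trans ?_)
      gcongr
      exact sub_nonneg.2 (Real.one_le_exp (by positivity))

theorem IsFlow.exists_lipschitzWith_mul_comp [ProperSpace E] {C : ℝ≥0} (hX : IsFlow v X)
    (hv : ∀ t, LipschitzWith K (v t)) (hc : ∀ x, Continuous fun t => v t x) (hη : ContDiff ℝ ∞ η)
    (hηs : HasCompactSupport η) (hφ : LipschitzWith C φ) (hφs : HasCompactSupport φ) (T : ℝ) :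
    ∃ L, LipschitzWith L fun p : E × ℝ => η p.2 * φ (X p.2 T p.1) := by
  refine exists_lipschitzWith_of_hasCompactSupport ?_
    (hX.hasCompactSupport_mul_comp hv hc hηs hφs T)
  have hmul : LocallyLipschitz fun q : ℝ × ℝ => q.1 * q.2 :=
    (contDiff_fst.mul contDiff_snd : ContDiff ℝ 1 _).locallyLipschitz
  have hη' : LocallyLipschitz η := (hη.of_le (by simp)).locallyLipschitz
  exact hmul.comp ((hη'.comp LipschitzWith.prod_snd.locallyLipschitz).prodMk
    (hφ.locallyLipschitz.comp (hX.locallyLipschitz hv hc T)))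

namespace IsWeakSolution

variable {v : ℝ → Ed d → Ed d} {C K : ℝ≥0}

theorem integral_eq_zero_of_lipschitzWith (h : IsWeakSolution v m a b) (hab : a ≤ b)
    (hv : Continuous fun p : Ed d × ℝ => v p.2 p.1) {χ g : Ed d × ℝ → ℝ}
    (hχ : LipschitzWith C χ) (hχs : HasCompactSupport χ) (hχU : tsupport χ ⊆ univ ×ˢ Ioo a b)
    (hg : Continuous g) (hD : ∀ p, HasLineDerivAt ℝ χ (g p) p (v p.2 p.1, 1)) :
    ∫ t in a..b, ∫ x, g (x, t) ∂(m t).1 = 0 := by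
  have hV : Continuous fun p : Ed d × ℝ => (v p.2 p.1, (1 : ℝ)) := hv.prodMk continuous_const
  obtain ⟨S, χs, hS, hSU, hχs, hlim⟩ :=
    exists_seq_contDiff_tendsto_of_hasLineDerivAt hχ hχs (isOpen_univ.prod isOpen_Ioo) hχU hg hV hD
  have hcont (n : ℕ) : Continuous fun p : Ed d × ℝ => fderiv ℝ (χs n) p (v p.2 p.1, 1) :=
    ((hχs n).1.continuous_fderiv (by simp)).clm_apply hV
  obtain ⟨B, hB⟩ := exists_forall_abs_fderiv_apply_le hV.continuousOn hS C
  have hzero (n : ℕ) : ∫ t in a..b, ∫ x, fderiv ℝ (χs n) (x, t) (v t x, 1) ∂(m t).1 = 0 :=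
    h.integral_eq_zero (χs n) (hχs n).1
      (hS.of_isClosed_subset (isClosed_tsupport _) (hχs n).2.1) ((hχs n).2.1.trans hSU)
  have hconv := h.continuousOn.tendsto_integral_integral hab hcont
    (fun n => hB (χs n) (hχs n).2.2 (hχs n).2.1) hlim
  simp only [hzero] at hconv
  exact tendsto_nhds_unique hconv tendsto_const_nhds

theorem integral_flow_eq (h : IsWeakSolution v m a b) {X : ℝ → ℝ → Ed d → Ed d}
    (hX : IsFlow v X) (hv : ∀ t, LipschitzWith K (v t)) (hc : ∀ x, Continuous fun t => v t x)
    {φ : Ed d → ℝ} (hφ : LipschitzWith C φ) (hφs : HasCompactSupport φ) (hab : a < b) {t T : ℝ}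
    (ht : t ∈ Icc a b) (hT : T ∈ Icc a b) :
    ∫ x, φ (X t T x) ∂(m t).1 = ∫ x, φ x ∂(m T).1 := by
  have hXc : Continuous fun p : Ed d × ℝ => X p.2 T p.1 := (hX.locallyLipschitz hv hc T).continuous
  obtain ⟨B, hB⟩ := hφ.continuous.bounded_above_of_compact_support hφs
  have hF : ContinuousOn (fun t => ∫ x, φ (X t T x) ∂(m t).1) (Icc a b) :=
    h.continuousOn.continuousOn_integral (hφ.continuous.comp hXc) fun p => hB _
  suffices hweak : ∀ η : ℝ → ℝ, ContDiff ℝ ∞ η → HasCompactSupport η → tsupport η ⊆ Ioo a b →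
      ∫ r in a..b, deriv η r * ∫ x, φ (X r T x) ∂(m r).1 = 0 by
    have hconst := eq_left_of_forall_integral_deriv_mul_eq_zero hab hF hweak
    have := (hconst t ht).trans (hconst T hT).symm
    simpa only [hX.self] using this
  intro η hη hηs hηI
  obtain ⟨L, hL⟩ := hX.exists_lipschitzWith_mul_comp hv hc hη hηs hφ hφs T
  have hvc : Continuous fun p : Ed d × ℝ => v p.2 p.1 :=
    continuous_prod_of_continuous_lipschitzWith (fun p : Ed d × ℝ => v p.2 p.1) K hc hv
  have hsupp : tsupport (fun p : Ed d × ℝ => η p.2 * φ (X p.2 T p.1)) ⊆ univ ×ˢ Ioo a b := by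
    refine ((closure_mono fun p hp => ?_).trans_eq
      ((isClosed_tsupport η).preimage continuous_snd).closure_eq).trans
        fun p hp => ⟨trivial, hηI hp⟩
    exact subset_tsupport η (left_ne_zero_of_mul hp)
  have hg : Continuous fun p : Ed d × ℝ => deriv η p.2 * φ (X p.2 T p.1) :=
    ((hη.continuous_deriv (by simp)).comp continuous_snd).mul (hφ.continuous.comp hXc)
  simpa only [integral_const_mul] using h.integral_eq_zero_of_lipschitzWith hab.le hvc hL
    (hX.hasCompactSupport_mul_comp hv hc hηs hφs T) hsupp hg
    (hX.hasLineDerivAt_mul_comp hv (hη.differentiable (by simp)) hL)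

theorem map_flow_eq (h : IsWeakSolution v m a b) {X : ℝ → ℝ → Ed d → Ed d}
    (hX : IsFlow v X) (hv : ∀ t, LipschitzWith K (v t)) (hc : ∀ x, Continuous fun t => v t x)
    {t T : ℝ} (ht : t ∈ Icc a b) (hT : T ∈ Icc a b) : (m t).1.map (X t T) = (m T).1 := by
  rcases eq_or_ne t T with rfl | htT
  · simp only [funext (hX.self t), Measure.map_id']
  have hab : a < b := ((ht.1.trans ht.2).lt_of_ne) fun h => htT (by grind)
  have hXc := hX.continuous hv t T
  have := Measure.isProbabilityMeasure_map (μ := (m t).1) hXc.aemeasurable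
  refine measure_ext_of_forall_lipschitzWith_integral_eq fun φ C hφ hφs => ?_
  rw [integral_map hXc.aemeasurable hφ.continuous.aestronglyMeasurable]
  exact h.integral_flow_eq hX hv hc hφ hφs hab ht hT

theorem W2_le (h : IsWeakSolution v m a b) (hv : ∀ t, LipschitzWith K (v t))
    (hc : ∀ x, Continuous fun t => v t x) {A B : ℝ} (hA : 0 ≤ A) (hB : 0 ≤ B) {t T : ℝ}
    (ht : t ∈ Icc a b) (hT : T ∈ Icc a b) (hvB : ∀ r ∈ uIcc t T, ∀ x, ‖v r x‖ ≤ A * (B + ‖x‖)) :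
    W2 (m t) (m T) ≤ (B + varsigma2 (m t)) * (Real.exp (A * |T - t|) - 1) := by
  obtain ⟨X, hX⟩ := exists_isFlow hv hc
  exact W2_le_of_map_eq hB (sub_nonneg.2 (Real.one_le_exp (by positivity)))
    (hX.continuous hv t T).measurable (h.map_flow_eq hX hv hc ht hT) (hX.norm_sub_le hA hvB)

end IsWeakSolution

end ContinuityEquation

section Gronwall

theorem gronwallBound_le {δ K ε x : ℝ} (hK : 0 ≤ K) (hε : 0 ≤ ε) :
    gronwallBound δ K ε x ≤ (δ + ε * x) * Real.exp (K * x) := by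
  rcases hK.eq_or_lt with rfl | hK
  · simp [gronwallBound_K0]
  · have h := mul_le_mul_of_nonneg_left (exp_sub_one_le_mul_exp (K * x)) (div_nonneg hε hK.le)
    rw [gronwallBound_of_K_ne_0 hK.ne', add_mul]
    calc δ * Real.exp (K * x) + ε / K * (Real.exp (K * x) - 1)
        ≤ δ * Real.exp (K * x) + ε / K * (K * x * Real.exp (K * x)) := by gcongr
      _ = δ * Real.exp (K * x) + ε * x * Real.exp (K * x) := by field_simp

theorem le_gronwallBound_of_forall_sub_le {g : ℝ → ℝ} {a b A B : ℝ}
    (hg : ContinuousOn g (Icc a b))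
    (h : ∀ t ∈ Icc a b, ∀ r ∈ Icc t b, ∀ S, (∀ q ∈ Icc t r, g q ≤ S) →
      g r - g t ≤ (B + S + g t) * (Real.exp (A * (r - t)) - 1)) :
    ∀ t ∈ Icc a b, g t ≤ gronwallBound (g a) (2 * A) (A * B) (t - a) := by
  refine le_gronwallBound_of_liminf_deriv_right_le hg (f' := fun t => A * (B + g t + g t))
    (fun t ht r hr => Eventually.frequently ?_) le_rfl fun t _ => by linarith
  obtain ⟨S, hS, hSr⟩ : ∃ S, g t < S ∧ A * (B + S + g t) < r := by
    have hlt : ∀ᶠ S in 𝓝[>] g t, A * (B + S + g t) < r :=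
      (by fun_prop : Continuous fun S =>
        A * (B + S + g t)).continuousWithinAt.eventually_lt_const hr
    exact (eventually_mem_nhdsWithin.and hlt).exists
  have hderiv : HasDerivAt (fun z => (B + S + g t) * Real.exp (A * (z - t)))
      (A * (B + S + g t)) t := by
    simpa [mul_comm] using
      ((((hasDerivAt_id t).sub_const t).const_mul A).exp.const_mul (B + S + g t))
  have hslope := (hasDerivAt_iff_tendsto_slope.1 hderiv).mono_left
    (nhdsWithin_mono t fun z (hz : t < z) => hz.ne')
  have hbelow : {z | g z < S} ∈ 𝓝[≥] t :=
    ((hg t (Ico_subset_Icc_self ht)).mono_of_mem_nhdsWithin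
      (Icc_mem_nhdsGE_of_mem ht)).eventually_lt_const hS
  obtain ⟨c, htc, hc⟩ := mem_nhdsGE_iff_exists_Icc_subset.1 hbelow
  filter_upwards [hslope.eventually_lt_const hSr, Ioo_mem_nhdsGT (lt_min htc ht.2)]
    with z hz hzt
  have hzc : z < c := hzt.2.trans_le (min_le_left c b)
  have hzb : z < b := hzt.2.trans_le (min_le_right c b)
  refine lt_of_le_of_lt ?_ hz
  rw [slope_def_field, sub_self, mul_zero, ← mul_sub, Real.exp_zero, inv_mul_eq_div]
  have := sub_pos.2 hzt.1
  gcongr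
  exact h t (Ico_subset_Icc_self ht) z ⟨hzt.1.le, hzb.le⟩ S fun q hq =>
    (hc ⟨hq.1, hq.2.trans hzc.le⟩).le

end Gronwall

section NonlocalContinuityEquation

variable {d : ℕ} {U : Type*} {f : Ed d → P2 d → U → Ed d} {u : U} {m : ℝ → P2 d} {a b C₀ C₁ : ℝ}

/-- The velocity field `f(·, m_t, u)` along a curve `m` defined on `[a, b]`. Outside `[a, b]` it is
frozen at the nearest endpoint, which makes it continuous in time. -/
def velocityAlong (f : Ed d → P2 d → U → Ed d) (u : U) (m : ℝ → P2 d) (hab : a ≤ b) (t : ℝ)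
    (x : Ed d) : Ed d :=
  f x (m (projIcc a b hab t)) u

theorem velocityAlong_of_mem {hab : a ≤ b} {t : ℝ} (ht : t ∈ Icc a b) (x : Ed d) :
    velocityAlong f u m hab t x = f x (m t) u := by
  rw [velocityAlong, projIcc_of_mem hab ht]

theorem lipschitzWith_velocityAlong
    (hf : ∀ x y μ ν, ‖f x μ u - f y ν u‖ ≤ C₀ * (‖x - y‖ + W2 μ ν)) (hab : a ≤ b) (t : ℝ) :
    LipschitzWith C₀.toNNReal (velocityAlong f u m hab t) := by
  refine .of_dist_le' fun x y => ?_
  have := hf x y (m (projIcc a b hab t)) (m (projIcc a b hab t))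
  rwa [W2_self, add_zero, ← dist_eq_norm, ← dist_eq_norm] at this

theorem continuous_velocityAlong
    (hf : ∀ x y μ ν, ‖f x μ u - f y ν u‖ ≤ C₀ * (‖x - y‖ + W2 μ ν)) (hab : a ≤ b)
    (hm : W2ContinuousOn m a b) (x : Ed d) :
    Continuous fun t => velocityAlong f u m hab t x := by
  have hcont : ContinuousOn (fun t => f x (m t) u) (Icc a b) := fun t ht => by
    refine tendsto_iff_dist_tendsto_zero.2 (squeeze_zero (fun _ => dist_nonneg) (fun r => ?_)
      (by simpa using (hm.tendsto_W2 ht).const_mul C₀))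
    simpa only [dist_eq_norm, sub_self, norm_zero, zero_add] using hf x x (m r) (m t)
  exact (continuousOn_iff_continuous_domRestrict.1 hcont).comp continuous_projIcc

theorem SolvesCE.isWeakSolution (h : SolvesCE f u m a b) (hab : a ≤ b) :
    IsWeakSolution (velocityAlong f u m hab) m a b where
  continuousOn := h.1
  integral_eq_zero χ hχ hχs hχU := by
    rw [← h.2 χ hχ hχs hχU]
    refine intervalIntegral.integral_congr fun t ht => integral_congr_ae (.of_forall fun x => ?_)
    rw [uIcc_of_le hab] at ht
    simp only [velocityAlong_of_mem ht]
    exact (deriv_add_fderiv_eq_fderiv_prodMk (hχ.differentiable (by simp) (x, t)) _).symm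

theorem SolvesCE.W2_le (h : SolvesCE f u m a b)
    (hC₁ : 0 ≤ C₁) (hf : ∀ x y μ ν, ‖f x μ u - f y ν u‖ ≤ C₀ * (‖x - y‖ + W2 μ ν))
    (hgrowth : ∀ x μ, ‖f x μ u‖ ≤ C₁ * (1 + ‖x‖ + varsigma2 μ)) {t r S : ℝ}
    (ht : t ∈ Icc a b) (hr : r ∈ Icc t b) (hS : ∀ q ∈ Icc t r, varsigma2 (m q) ≤ S) :
    W2 (m t) (m r) ≤ (1 + S + varsigma2 (m t)) * (Real.exp (C₁ * (r - t)) - 1) := by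
  have hab : a ≤ b := ht.1.trans ht.2
  have hS₀ : 0 ≤ S := (varsigma2_nonneg _).trans (hS t (left_mem_Icc.2 hr.1))
  have hsub : Icc t r ⊆ Icc a b := Icc_subset_Icc ht.1 hr.2
  have := (h.isWeakSolution hab).W2_le (lipschitzWith_velocityAlong hf hab)
    (continuous_velocityAlong hf hab h.1) hC₁ (add_nonneg zero_le_one hS₀) ht
    (hsub (right_mem_Icc.2 hr.1)) fun q hq x => by
      rw [uIcc_of_le hr.1] at hq
      rw [velocityAlong_of_mem (hsub hq)]
      exact (hgrowth x (m q)).trans (mul_le_mul_of_nonneg_left (by linarith [hS q hq]) hC₁)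
  rwa [abs_of_nonneg (sub_nonneg.2 hr.1)] at this

theorem SolvesCE.varsigma2_le (h : SolvesCE f u m a b)
    (hC₁ : 0 ≤ C₁) (hf : ∀ x y μ ν, ‖f x μ u - f y ν u‖ ≤ C₀ * (‖x - y‖ + W2 μ ν))
    (hgrowth : ∀ x μ, ‖f x μ u‖ ≤ C₁ * (1 + ‖x‖ + varsigma2 μ)) {t : ℝ}
    (ht : t ∈ Icc a b) :
    varsigma2 (m t) ≤ (varsigma2 (m a) + C₁ * (t - a)) * Real.exp (2 * C₁ * (t - a)) := by
  have hgron := le_gronwallBound_of_forall_sub_le (A := C₁) (B := 1) h.1.continuousOn_varsigma2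
    fun q hq r hr S hS => (sub_le_iff_le_add'.2 (varsigma2_le_varsigma2_add_W2 _ _)).trans
      ((W2_comm _ _).trans_le (h.W2_le hC₁ hf hgrowth hq hr hS))
  refine (hgron t ht).trans ((gronwallBound_le (by positivity) (by positivity)).trans_eq ?_)
  rw [mul_one]

theorem SolvesCE.varsigma2_le_of_le (h : SolvesCE f u m a b)
    (hC₁ : 0 ≤ C₁) (hf : ∀ x y μ ν, ‖f x μ u - f y ν u‖ ≤ C₀ * (‖x - y‖ + W2 μ ν))
    (hgrowth : ∀ x μ, ‖f x μ u‖ ≤ C₁ * (1 + ‖x‖ + varsigma2 μ)) {t S δ : ℝ}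
    (ht : t ∈ Icc a b) (hδ : b - a ≤ δ) (hS : varsigma2 (m a) ≤ S) :
    varsigma2 (m t) ≤ (C₁ * δ + S) * Real.exp (2 * C₁ * δ) := by
  have htδ : t - a ≤ δ := by linarith [ht.2]
  have hδ₀ : 0 ≤ δ := (sub_nonneg.2 ht.1).trans htδ
  have hS₀ : 0 ≤ S := (varsigma2_nonneg (m a)).trans hS
  rw [add_comm]
  exact (h.varsigma2_le hC₁ hf hgrowth ht).trans (by gcongr)

theorem statement18_general {mhat : P2 d} {R δ : ℝ} (hC₁ : 0 ≤ C₁)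
    (hf : ∀ x y μ ν, ‖f x μ u - f y ν u‖ ≤ C₀ * (‖x - y‖ + W2 μ ν))
    (hgrowth : ∀ x μ, ‖f x μ u‖ ≤ C₁ * (1 + ‖x‖ + varsigma2 μ)) (hδ : b - a ≤ δ)
    (hsol : SolvesCE f u m a b) (hma : W2 mhat (m a) ≤ R) :
    ∀ t ∈ Icc a b, W2 (m t) (m a) ≤ C2const C₁ δ (varsigma2 mhat) R * (t - a) := by
  intro t ht
  have hinit : varsigma2 (m a) ≤ varsigma2 mhat + R := by
    linarith [varsigma2_le_varsigma2_add_W2 (m a) mhat, W2_comm (m a) mhat]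
  set S := (C₁ * δ + (varsigma2 mhat + R)) * Real.exp (2 * C₁ * δ) with hSdef
  have hbound : ∀ q ∈ Icc a b, varsigma2 (m q) ≤ S := fun q hq =>
    hsol.varsigma2_le_of_le hC₁ hf hgrowth hq hδ hinit
  have hta : 0 ≤ t - a := sub_nonneg.2 ht.1
  have htδ : t - a ≤ δ := by linarith [ht.2]
  have hab : a ≤ b := ht.1.trans ht.2
  rw [W2_comm]
  refine (hsol.W2_le hC₁ hf hgrowth (left_mem_Icc.2 hab) ht
    fun q hq => hbound q ⟨hq.1, hq.2.trans ht.2⟩).trans ?_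
  have hS := hbound a (left_mem_Icc.2 hab)
  have hS₀ := (varsigma2_nonneg (m a)).trans hS
  calc _ ≤ (1 + S + S) * (C₁ * (t - a) * Real.exp (C₁ * (t - a))) :=
        mul_le_mul (add_le_add_right hS _) (exp_sub_one_le_mul_exp _)
          (sub_nonneg.2 (Real.one_le_exp (by positivity))) (by linarith)
    _ ≤ (1 + S + S) * (C₁ * (t - a) * Real.exp (C₁ * δ)) := by gcongr
    _ = C2const C₁ δ (varsigma2 mhat) R * (t - a) := by
        rw [C2const, hSdef]
        ring

end NonlocalContinuityEquation

/-- a priori estimate on the speed of the solution. -/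
theorem statement18 {d : ℕ} {U : Type*} [MetricSpace U] [CompactSpace U]
    (f : Ed d → P2 d → U → Ed d) (C₀ C₁ : ℝ) (hC₀ : 0 < C₀) (hC₁ : 0 < C₁)
    (hcont : ∀ (x : Ed d) (μ : P2 d), Continuous fun u : U => f x μ u)
    (hLip : ∀ (x y : Ed d) (μ ν : P2 d) (u : U),
      ‖f x μ u - f y ν u‖ ≤ C₀ * (‖x - y‖ + W2 μ ν))
    (hgrowth : ∀ (x : Ed d) (μ : P2 d) (u : U), ‖f x μ u‖ ≤ C₁ * (1 + ‖x‖ + varsigma2 μ))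
    (mhat : P2 d) (R δ : ℝ) (hR : 0 ≤ R) (hδ : 0 < δ) (u : U)
    (s τ : ℝ) (hτ : 0 < τ) (hτδ : τ < δ)
    (m : ℝ → P2 d) (hsol : SolvesCE f u m s (s + τ))
    (hms : W2 mhat (m s) ≤ R) :
    ∀ t ∈ Icc s (s + τ), W2 (m t) (m s) ≤ C2const C₁ δ (varsigma2 mhat) R * (t - s) :=
  statement18_general hC₁.le (fun x y μ ν => hLip x y μ ν u) (fun x μ => hgrowth x μ u)
    (by linarith) hsol hms
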